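/- arXiv:0912.5039 — 11 statements merged into one kernel-verified Lean document; each statement's English description precedes it below -/
import Mathlib

section
/- For every ε > 0 there exists n₀ such that for all n ≥ n₀: if 𝐅 is a Q₂-free family of subsets of [n] whose members have at most three different sizes (i.e. |{|A| : A ∈ 𝐅}| ≤ 3), then |𝐅| ≤ ((3 + √2)/2 + ε)·C(n, ⌊n/2⌋). Note (3 + √2)/2 ≤ 2.20711. -/
/-!
A permutation `σ` of `[n]` is read as a maximal chain, whose `k`-th member `initSeg σ k` consists of
the points sent below `k`.  For a uniform `σ` that member is a uniform `k`-set
(`card_hit_mul_choose`).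
Let `k₁ < k₂ < k₃` be the sizes that occur in `F`, let `A, B, C` be the events that the `k₁`-st,
`k₂`-nd, `k₃`-rd member of the chain lies in `F`, and let `a, b, c` be their probabilities.
Then `|F| ≤ (a + b + c) * C(n, ⌊n/2⌋)`.

Transposing the points at positions `k₂ - 1` and `k₂` (counted from `0`) replaces the
`k₂`-th member of the chain by another `k₂`-set and leaves its `k₁`-st and `k₃`-rd members alone.
Let `B'` be the event that the new `k₂`-set lies
in `F`.  As `F` is `Q₂`-free, `A ∩ B ∩ B' ∩ C` is empty, so `P(A B B') ≤ P(A) - P(A C)`.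
Given the first `k₂ - 1` steps of the chain, `B` and `B'` amount to drawing two points without
replacement from `n - k₂ + 1` points, so by the Cauchy–Schwarz inequality
`P(A B)² ≤ a (P(A B B') + 1 / (n - k₂ + 1))` (`second_moment`).  Together with
`P(A B) ≥ a + b - 1` and `P(A C) ≥ a + c - 1` this gives `a + b - 1 ≤ √(a (1 - c)) + o(1)`, and
symmetrically `b + c - 1 ≤ √(c (1 - a)) + o(1)`.  Summing, and writing `a = sin² α`, `c = sin² γ`,
`2 (a + b + c) ≤ 3 - cos (α + γ) cos (α - γ) + sin (α + γ) + o(1) ≤ 3 + √2 + o(1)`.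

The error terms are small unless `k₂` is within a constant of `0` or `n`; in that case the middle
layer has `o(C(n, ⌊n/2⌋))` members, and the other two layers have at most `2 C(n, ⌊n/2⌋)`.
-/

/-- A family of finite sets is `Q₂`-free if it contains no four pairwise distinct sets
`A, B, C, D` with `A ⊆ B ⊆ D` and `A ⊆ C ⊆ D`. -/
def Q2Free {α : Type*} (F : Finset (Finset α)) : Prop :=
  ¬ ∃ A B C D : Finset α, A ∈ F ∧ B ∈ F ∧ C ∈ F ∧ D ∈ F ∧
    A ≠ B ∧ A ≠ C ∧ A ≠ D ∧ B ≠ C ∧ B ≠ D ∧ C ≠ D ∧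
    A ⊆ B ∧ B ⊆ D ∧ A ⊆ C ∧ C ⊆ D

/-! ### Random maximal chains -/

/-- The `k`-th member of the maximal chain attached to `σ`: the points at positions below `k`, where
`σ x` is the position of `x`. -/
def initSeg {n : ℕ} (σ : Equiv.Perm (Fin n)) (k : ℕ) : Finset (Fin n) :=
  Finset.univ.filter fun x => (σ x : ℕ) < k

/-- The chains whose `k`-th member lies in `F`. -/
def hit {n : ℕ} (F : Finset (Finset (Fin n))) (k : ℕ) : Finset (Equiv.Perm (Fin n)) :=
  Finset.univ.filter fun σ => initSeg σ k ∈ F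

lemma mem_initSeg {n : ℕ} {σ : Equiv.Perm (Fin n)} {k : ℕ} {x : Fin n} :
    x ∈ initSeg σ k ↔ (σ x : ℕ) < k := by simp [initSeg]

lemma mem_hit {n : ℕ} {F : Finset (Finset (Fin n))} {k : ℕ} {σ : Equiv.Perm (Fin n)} :
    σ ∈ hit F k ↔ initSeg σ k ∈ F := by simp [hit]

lemma card_initSeg {n : ℕ} (σ : Equiv.Perm (Fin n)) {k : ℕ} (hk : k ≤ n) :
    (initSeg σ k).card = k := by
  have h : (initSeg σ k).map σ.toEmbedding
      = Finset.univ.filter fun x : Fin n => (x : ℕ) < k := by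
    ext x
    simp only [Finset.mem_map_equiv, mem_initSeg, Equiv.apply_symm_apply, Finset.mem_filter,
      Finset.mem_univ, true_and]
  rw [← Finset.card_map σ.toEmbedding, h, Fin.card_filter_val_lt]
  exact min_eq_right hk

lemma card_initSeg_eq {n : ℕ} (S : Finset (Fin n)) :
    (Finset.univ.filter fun σ : Equiv.Perm (Fin n) => initSeg σ S.card = S).card
      = (S.card).factorial * (n - S.card).factorial := by
  have h := Numbering.card_prefixed S
  rw [Fintype.card_fin] at h
  rw [← h]
  let e : Equiv.Perm (Fin n) ≃ Numbering (Fin n) :=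
    Equiv.equivCongr (Equiv.refl _) (finCongr (Fintype.card_fin n).symm)
  refine Finset.card_equiv e fun σ => ?_
  rw [Numbering.mem_prefixed, Finset.mem_filter]
  simp only [Finset.mem_univ, true_and, Finset.ext_iff, mem_initSeg, Numbering.IsPrefix]
  exact forall_congr' fun x => ⟨fun h => h.symm, fun h => h.symm⟩

/-- The `k`-th member of a uniformly random chain is a uniformly random `k`-set. -/
lemma card_hit_mul_choose {n : ℕ} (F : Finset (Finset (Fin n))) {k : ℕ} (hk : k ≤ n) :
    (hit F k).card * n.choose k = (F.filter fun S => S.card = k).card * n.factorial := by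
  have h : (hit F k).card
      = (F.filter fun S => S.card = k).card * (k.factorial * (n - k).factorial) := by
    rw [Finset.card_eq_sum_card_fiberwise (f := fun σ => initSeg σ k)
      (t := F.filter fun S => S.card = k)]
    · rw [← smul_eq_mul, ← Finset.sum_const]
      refine Finset.sum_congr rfl fun S hS => ?_
      obtain ⟨hSF, rfl⟩ := Finset.mem_filter.1 hS
      rw [← card_initSeg_eq]
      congr 1
      ext σ
      simp only [Finset.mem_filter, mem_hit, Finset.mem_univ, true_and, and_iff_right_iff_imp]
      rintro h
      rwa [h]
    · intro σ hσ
      exact Finset.mem_filter.2 ⟨mem_hit.1 hσ, card_initSeg σ hk⟩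
  rw [h, ← Nat.choose_mul_factorial_mul_factorial hk]
  ring

/-! ### The second moment inequality -/

/-- Two distinct points of `J` can be moved to two further distinct points of `J` by a permutation
supported in `J`. -/
lemma exists_perm_pair {n : ℕ} {J : Finset (Fin n)} {i j l l' : Fin n} (hi : i ∈ J) (hj : j ∈ J)
    (hl : l ∈ J) (hl' : l' ∈ J) (hij : i ≠ j) (hll' : l ≠ l') :
    ∃ π : Equiv.Perm (Fin n), (∀ x, x ∉ J → π x = x) ∧ π i = l ∧ π j = l' := by
  have hmem : Equiv.swap i l j ∈ J := by
    rw [Equiv.swap_apply_def]; split_ifs <;> assumption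
  have hne : Equiv.swap i l j ≠ l := by
    intro h
    rw [Equiv.swap_apply_eq_iff, Equiv.swap_apply_right] at h
    exact hij h.symm
  have hfix : ∀ {x u v : Fin n}, x ∉ J → u ∈ J → v ∈ J → Equiv.swap u v x = x :=
    fun hx hu hv => Equiv.swap_apply_of_ne_of_ne (fun h => hx (h ▸ hu)) (fun h => hx (h ▸ hv))
  refine ⟨Equiv.swap (Equiv.swap i l j) l' * Equiv.swap i l, fun x hx => ?_, ?_, ?_⟩
  · rw [Equiv.Perm.mul_apply, hfix hx hi hl, hfix hx hmem hl']
  · rw [Equiv.Perm.mul_apply, Equiv.swap_apply_left, Equiv.swap_apply_of_ne_of_ne hne.symm hll']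
  · rw [Equiv.Perm.mul_apply, Equiv.swap_apply_left]

/-- Near-independence of `B i` and `B j` given `E`, when the events `B l`, `l ∈ J`, are permuted by
the permutations supported in `J` and `E` is invariant under them: with `p = |E ∩ B i|`,
`q = |E ∩ B i ∩ B j|` and `m = |J|`, one has `p² ≤ |E| (q + |E| / m)`.  This is the Cauchy–Schwarz
inequality for the number of `l ∈ J` for which `B l` occurs. -/
lemma second_moment {n : ℕ} (J : Finset (Fin n)) (E : Finset (Equiv.Perm (Fin n)))
    (B : Fin n → Finset (Equiv.Perm (Fin n)))
    (hE : ∀ π : Equiv.Perm (Fin n), (∀ x, x ∉ J → π x = x) → ∀ σ, π * σ ∈ E ↔ σ ∈ E)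
    (hB : ∀ π : Equiv.Perm (Fin n), (∀ x, x ∉ J → π x = x) →
      ∀ σ, ∀ l, π * σ ∈ B (π l) ↔ σ ∈ B l)
    {i j : Fin n} (hi : i ∈ J) (hj : j ∈ J) (hij : i ≠ j) :
    J.card * (E ∩ B i).card ^ 2 ≤ E.card * (J.card * (E ∩ (B i ∩ B j)).card + E.card) := by
  have hp : ∀ l ∈ J, (E ∩ B l).card = (E ∩ B i).card := by
    intro l hl
    by_cases hli : l = i
    · rw [hli]
    obtain ⟨π, hπ, h1, -⟩ := exists_perm_pair hi hl hl hi (Ne.symm hli) hli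
    refine (Finset.card_equiv (Equiv.mulLeft π) fun σ => ?_).symm
    simp only [Finset.mem_inter, Equiv.coe_mulLeft, hE π hπ]
    rw [← h1, hB π hπ]
  have hq : ∀ l ∈ J, ∀ l' ∈ J, l ≠ l' →
      (E ∩ (B l ∩ B l')).card = (E ∩ (B i ∩ B j)).card := by
    intro l hl l' hl' hll'
    obtain ⟨π, hπ, h1, h2⟩ := exists_perm_pair hi hj hl hl' hij hll'
    refine (Finset.card_equiv (Equiv.mulLeft π) fun σ => ?_).symm
    simp only [Finset.mem_inter, Equiv.coe_mulLeft, hE π hπ]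
    rw [← h1, ← h2, hB π hπ, hB π hπ]
  set p := (E ∩ B i).card with hpdef
  set q := (E ∩ (B i ∩ B j)).card with hqdef
  let d : Equiv.Perm (Fin n) → ℕ := fun σ => ∑ l ∈ J, if σ ∈ B l then 1 else 0
  have hd1 : ∑ σ ∈ E, d σ = J.card * p := by
    simp only [d]
    rw [Finset.sum_comm, ← smul_eq_mul, ← Finset.sum_const]
    refine Finset.sum_congr rfl fun l hl => ?_
    rw [← hp l hl, Finset.sum_boole, Finset.filter_mem_eq_inter, Nat.cast_id]
  have hd2 : ∑ σ ∈ E, d σ ^ 2 ≤ J.card * (p + J.card * q) := by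
    have h1 : ∑ σ ∈ E, d σ ^ 2 = ∑ l ∈ J, ∑ l' ∈ J, (E ∩ (B l ∩ B l')).card := by
      simp only [d, sq, Finset.sum_mul_sum]
      rw [Finset.sum_comm]
      refine Finset.sum_congr rfl fun l _ => ?_
      rw [Finset.sum_comm]
      refine Finset.sum_congr rfl fun l' _ => ?_
      rw [← Finset.filter_mem_eq_inter, Finset.card_filter]
      refine Finset.sum_congr rfl fun σ _ => ?_
      by_cases h1 : σ ∈ B l <;> by_cases h2 : σ ∈ B l' <;> simp [h1, h2]
    rw [h1, ← smul_eq_mul]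
    refine Finset.sum_le_card_nsmul _ _ _ fun l hl => ?_
    calc ∑ l' ∈ J, (E ∩ (B l ∩ B l')).card
        ≤ ∑ l' ∈ J, ((if l' = l then p else 0) + q) := by
          refine Finset.sum_le_sum fun l' hl' => ?_
          by_cases h : l' = l
          · subst h
            simp [hp l' hl']
          · simp [h, hq l hl l' hl' (Ne.symm h)]
      _ = p + J.card * q := by
          simp [Finset.sum_add_distrib, hl]
  have hcs := sq_sum_le_card_mul_sum_sq (s := E) (f := d)
  rw [hd1] at hcs
  have hpe : p ≤ E.card := Finset.card_le_card Finset.inter_subset_left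
  have hJ : 0 < J.card := Finset.card_pos.2 ⟨i, hi⟩
  refine Nat.le_of_mul_le_mul_left ?_ hJ
  calc J.card * (J.card * p ^ 2) = (J.card * p) ^ 2 := by ring
    _ ≤ E.card * ∑ σ ∈ E, d σ ^ 2 := hcs
    _ ≤ E.card * (J.card * (p + J.card * q)) := by gcongr
    _ ≤ E.card * (J.card * (E.card + J.card * q)) := by gcongr
    _ = J.card * (E.card * (J.card * q + E.card)) := by ring

/-! ### Consequences of `Q₂`-freeness -/

/-- A permutation supported in a set of positions that lies on one side of the cut at `k` does not
change the `k`-th member of the chain. -/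
lemma initSeg_mul {n k : ℕ} {J : Finset (Fin n)} {π : Equiv.Perm (Fin n)}
    (hπ : ∀ x, x ∉ J → π x = x)
    (hJ : (∀ x ∈ J, (x : ℕ) < k) ∨ (∀ x ∈ J, k ≤ (x : ℕ))) (σ : Equiv.Perm (Fin n)) :
    initSeg (π * σ) k = initSeg σ k := by
  have hmem : ∀ x ∈ J, π x ∈ J := by
    intro x hx
    by_contra h
    exact h ((π.injective (hπ _ h)).symm ▸ hx)
  ext x
  rw [mem_initSeg, mem_initSeg, Equiv.Perm.mul_apply]
  by_cases hx : σ x ∈ J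
  · rcases hJ with hJ | hJ
    · exact iff_of_true (hJ _ (hmem _ hx)) (hJ _ hx)
    · exact iff_of_false (hJ _ (hmem _ hx)).not_gt (hJ _ hx).not_gt
  · rw [hπ _ hx]

lemma insert_initSeg {n k : ℕ} (σ : Equiv.Perm (Fin n)) (hk : k < n) :
    insert (σ.symm ⟨k, hk⟩) (initSeg σ k) = initSeg σ (k + 1) := by
  ext x
  rw [Finset.mem_insert, mem_initSeg, mem_initSeg, Equiv.eq_symm_apply, Fin.ext_iff]
  simp only
  omega

lemma erase_initSeg {n k : ℕ} (σ : Equiv.Perm (Fin n)) (hk : k < n) :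
    (initSeg σ (k + 1)).erase (σ.symm ⟨k, hk⟩) = initSeg σ k := by
  ext x
  rw [Finset.mem_erase, mem_initSeg, mem_initSeg, ne_eq, Equiv.eq_symm_apply, Fin.ext_iff]
  simp only
  omega

lemma initSeg_mono {n k l : ℕ} (σ : Equiv.Perm (Fin n)) (h : k ≤ l) :
    initSeg σ k ⊆ initSeg σ l := fun _ hx =>
  mem_initSeg.2 ((mem_initSeg.1 hx).trans_le h)

/-- If the three members of a chain and a second middle set `S` between the outer two all belonged to
`F`, they would form a `Q₂`. -/
lemma not_mem_of_hit {n : ℕ} {F : Finset (Finset (Fin n))} (hF : Q2Free F) {k₁ k₂ k₃ : ℕ}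
    (h12 : k₁ < k₂) (h23 : k₂ < k₃) (h3 : k₃ ≤ n) {σ : Equiv.Perm (Fin n)}
    (hA : σ ∈ hit F k₁) (hB : σ ∈ hit F k₂) (hC : σ ∈ hit F k₃) {S : Finset (Fin n)}
    (hS : S.card = k₂) (hne : S ≠ initSeg σ k₂) (h1S : initSeg σ k₁ ⊆ S)
    (hS3 : S ⊆ initSeg σ k₃) : S ∉ F := by
  intro hSF
  have c1 := card_initSeg σ (show k₁ ≤ n by omega)
  have c2 := card_initSeg σ (show k₂ ≤ n by omega)
  have c3 := card_initSeg σ h3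
  refine hF ⟨initSeg σ k₁, initSeg σ k₂, S, initSeg σ k₃, mem_hit.1 hA, mem_hit.1 hB, hSF,
    mem_hit.1 hC, ?_, ?_, ?_, hne.symm, ?_, ?_, initSeg_mono σ h12.le, initSeg_mono σ h23.le,
    h1S, hS3⟩
  all_goals
    intro h
    have := congrArg Finset.card h
    omega

lemma card_add_card_le {Ω : Type*} [DecidableEq Ω] {A C X : Finset Ω} (h : ∀ σ ∈ A, σ ∈ X → σ ∉ C) :
    (A ∩ X).card + (A ∩ C).card ≤ A.card := by
  rw [← Finset.card_union_of_disjoint]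
  · exact Finset.card_le_card
      (Finset.union_subset Finset.inter_subset_left Finset.inter_subset_left)
  · rw [Finset.disjoint_left]
    intro σ h1 h2
    exact h σ (Finset.mem_inter.1 h1).1 (Finset.mem_inter.1 h1).2 (Finset.mem_inter.1 h2).2

/-- The comparison of `P(A B)` with `P(A) - P(A C)`, by varying the point added in step `k₂`; here
`q` counts the chains in `A ∩ B ∩ B'`. -/
lemma lower_bound {n : ℕ} {F : Finset (Finset (Fin n))} (hF : Q2Free F) {k₁ k₂ k₃ : ℕ}
    (h12 : k₁ < k₂) (h23 : k₂ < k₃) (h3 : k₃ ≤ n) :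
    ∃ q : ℕ, q + (hit F k₁ ∩ hit F k₃).card ≤ (hit F k₁).card ∧
      (n - k₂ + 1) * (hit F k₁ ∩ hit F k₂).card ^ 2
        ≤ (hit F k₁).card * ((n - k₂ + 1) * q + (hit F k₁).card) := by
  obtain ⟨k, rfl⟩ : ∃ k, k₂ = k + 1 := ⟨k₂ - 1, by omega⟩
  have hk : k < n := by omega
  have hk' : k + 1 < n := by omega
  let J : Finset (Fin n) := Finset.Ici ⟨k, hk⟩
  have hmJ : ∀ x, x ∈ J ↔ k ≤ (x : ℕ) := fun x => by simp [J, Fin.le_def]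
  have hJc : J.card = n - (k + 1) + 1 := by
    simp only [J, Fin.card_Ici]
    omega
  let B : Fin n → Finset (Equiv.Perm (Fin n)) := fun j =>
    Finset.univ.filter fun σ => insert (σ.symm j) (initSeg σ k) ∈ F
  have hmB : ∀ j σ, σ ∈ B j ↔ insert (σ.symm j) (initSeg σ k) ∈ F := fun j σ => by simp [B]
  have hB0 : B ⟨k, hk⟩ = hit F (k + 1) := by
    ext σ
    rw [hmB, mem_hit, insert_initSeg]
  have key := second_moment J (hit F k₁) B
    (fun π hπ σ => by
      rw [mem_hit, mem_hit, initSeg_mul hπ (Or.inr fun x hx => by have := (hmJ x).1 hx; omega)])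
    (fun π hπ σ l => by
      rw [hmB, hmB, initSeg_mul hπ (Or.inr fun x hx => (hmJ x).1 hx)]
      have : (π * σ).symm (π l) = σ.symm l := by
        rw [Equiv.symm_apply_eq, Equiv.Perm.mul_apply, Equiv.apply_symm_apply]
      rw [this])
    (i := ⟨k, hk⟩) (j := ⟨k + 1, hk'⟩) ((hmJ _).2 le_rfl) ((hmJ _).2 (Nat.le_succ k))
    (by simp [Fin.ext_iff])
  rw [hB0, hJc] at key
  refine ⟨_, card_add_card_le fun σ hA hX hC => ?_, key⟩
  obtain ⟨hX1, hX2⟩ := Finset.mem_inter.1 hX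
  have hnot : σ.symm ⟨k + 1, hk'⟩ ∉ initSeg σ k := by
    rw [mem_initSeg, Equiv.apply_symm_apply]
    simp
  refine not_mem_of_hit hF h12 h23 h3 hA hX1 hC ?_ ?_ ?_ ?_ ((hmB _ _).1 hX2)
  · rw [Finset.card_insert_of_notMem hnot, card_initSeg σ hk.le]
  · intro h
    have := h ▸ Finset.mem_insert_self (σ.symm ⟨k + 1, hk'⟩) (initSeg σ k)
    rw [mem_initSeg, Equiv.apply_symm_apply] at this
    exact lt_irrefl _ this
  · exact (initSeg_mono σ (by omega)).trans (Finset.subset_insert _ _)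
  · refine Finset.insert_subset ?_ (initSeg_mono σ (by omega))
    rw [mem_initSeg, Equiv.apply_symm_apply]
    exact h23

/-- The comparison of `P(B C)` with `P(C) - P(A C)`, by varying the point removed from the
`(k₂ + 1)`-st member of the chain; here `q` counts the chains in `C ∩ B ∩ B'`. -/
lemma upper_bound {n : ℕ} {F : Finset (Finset (Fin n))} (hF : Q2Free F) {k₁ k₂ k₃ : ℕ}
    (h12 : k₁ < k₂) (h23 : k₂ < k₃) (h3 : k₃ ≤ n) :
    ∃ q : ℕ, q + (hit F k₃ ∩ hit F k₁).card ≤ (hit F k₃).card ∧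
      (k₂ + 1) * (hit F k₃ ∩ hit F k₂).card ^ 2
        ≤ (hit F k₃).card * ((k₂ + 1) * q + (hit F k₃).card) := by
  have hk : k₂ < n := by omega
  have hk' : k₂ - 1 < n := by omega
  let J : Finset (Fin n) := Finset.Iic ⟨k₂, hk⟩
  have hmJ : ∀ x, x ∈ J ↔ (x : ℕ) < k₂ + 1 := fun x => by simp [J, Fin.le_def]
  have hJc : J.card = k₂ + 1 := by simp only [J, Fin.card_Iic]
  let B : Fin n → Finset (Equiv.Perm (Fin n)) := fun j =>
    Finset.univ.filter fun σ => (initSeg σ (k₂ + 1)).erase (σ.symm j) ∈ F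
  have hmB : ∀ j σ, σ ∈ B j ↔ (initSeg σ (k₂ + 1)).erase (σ.symm j) ∈ F := fun j σ => by simp [B]
  have hB0 : B ⟨k₂, hk⟩ = hit F k₂ := by
    ext σ
    rw [hmB, mem_hit, erase_initSeg]
  have key := second_moment J (hit F k₃) B
    (fun π hπ σ => by
      rw [mem_hit, mem_hit, initSeg_mul hπ (Or.inl fun x hx => by have := (hmJ x).1 hx; omega)])
    (fun π hπ σ l => by
      rw [hmB, hmB, initSeg_mul hπ (Or.inl fun x hx => (hmJ x).1 hx)]
      have : (π * σ).symm (π l) = σ.symm l := by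
        rw [Equiv.symm_apply_eq, Equiv.Perm.mul_apply, Equiv.apply_symm_apply]
      rw [this])
    (i := ⟨k₂, hk⟩) (j := ⟨k₂ - 1, hk'⟩) ((hmJ _).2 (Nat.lt_succ_self k₂))
    ((hmJ _).2 (by simp only; omega)) (by simp only [ne_eq, Fin.ext_iff]; omega)
  rw [hB0, hJc] at key
  refine ⟨_, card_add_card_le fun σ hC hX hA => ?_, key⟩
  obtain ⟨hX1, hX2⟩ := Finset.mem_inter.1 hX
  have hmem : σ.symm ⟨k₂ - 1, hk'⟩ ∈ initSeg σ (k₂ + 1) := by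
    rw [mem_initSeg, Equiv.apply_symm_apply]
    simp only
    omega
  refine not_mem_of_hit hF h12 h23 h3 hA hX1 hC ?_ ?_ ?_ ?_ ((hmB _ _).1 hX2)
  · rw [Finset.card_erase_of_mem hmem, card_initSeg σ hk, Nat.succ_sub_one]
  · intro h
    have h' : σ.symm ⟨k₂ - 1, hk'⟩ ∈ initSeg σ k₂ := by
      rw [mem_initSeg, Equiv.apply_symm_apply]
      simp only
      omega
    rw [← h] at h'
    exact Finset.notMem_erase _ _ h'
  · intro x hx
    rw [mem_initSeg] at hx
    rw [Finset.mem_erase, mem_initSeg, ne_eq, Equiv.eq_symm_apply, Fin.ext_iff]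
    simp only
    omega
  · exact (Finset.erase_subset _ _).trans (initSeg_mono σ (by omega))

/-! ### Optimising the densities -/

/-- With `a = sin² α` and `c = sin² γ` the left side is
`1 - cos (α + γ) cos (α - γ) + sin (α + γ)`. -/
lemma trig_bound {a c : ℝ} (ha : 0 ≤ a) (ha1 : a ≤ 1) (hc : 0 ≤ c) (hc1 : c ≤ 1) :
    a + c + √(a * (1 - c)) + √(c * (1 - a)) ≤ 1 + √2 := by
  rw [Real.sqrt_mul ha, Real.sqrt_mul hc]
  have hx := Real.sq_sqrt ha
  have hz := Real.sq_sqrt hc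
  have hy := Real.sq_sqrt (sub_nonneg.2 ha1)
  have hw := Real.sq_sqrt (sub_nonneg.2 hc1)
  set x := √a
  set z := √c
  set y := √(1 - a)
  set w := √(1 - c)
  have hxy : x ^ 2 + y ^ 2 = 1 := by rw [hx, hy]; ring
  have hzw : z ^ 2 + w ^ 2 = 1 := by rw [hz, hw]; ring
  -- `S = sin (α + γ)`, `T = - cos (α + γ)`, `R = cos (α - γ)`, `U = sin (α - γ)`
  obtain ⟨S, hS⟩ : ∃ S, S = x * w + z * y := ⟨_, rfl⟩
  obtain ⟨T, hT⟩ : ∃ T, T = x * z - y * w := ⟨_, rfl⟩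
  obtain ⟨R, hR⟩ : ∃ R, R = x * z + y * w := ⟨_, rfl⟩
  obtain ⟨U, hU⟩ : ∃ U, U = x * w - z * y := ⟨_, rfl⟩
  have h1 : S ^ 2 + T ^ 2 = 1 := by
    have : S ^ 2 + T ^ 2 = (x ^ 2 + y ^ 2) * (z ^ 2 + w ^ 2) := by rw [hS, hT]; ring
    rw [this, hxy, hzw, one_mul]
  have h2 : R ^ 2 + U ^ 2 = 1 := by
    have : R ^ 2 + U ^ 2 = (x ^ 2 + y ^ 2) * (z ^ 2 + w ^ 2) := by rw [hR, hU]; ring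
    rw [this, hxy, hzw, one_mul]
  have h3 : a + c = 1 + T * R := by
    have : T * R = x ^ 2 * z ^ 2 - y ^ 2 * w ^ 2 := by rw [hT, hR]; ring
    rw [this, hx, hz, hy, hw]; ring
  have h4 : T * R + S ≤ √2 := by
    apply Real.le_sqrt_of_sq_le
    -- `(T R + S)² ≤ (T² + S²) (R² + 1) ≤ 2`
    nlinarith [sq_nonneg (T - R * S), sq_nonneg U, sq_nonneg T, sq_nonneg S]
  linarith

/-- The optimisation over the densities: `a, b, c` are `P(A), P(B), P(C)`, and `q, q'` are
`P(A B B'), P(C B B')`. -/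
lemma density_bound {a b c ab bc ac q q' δ : ℝ} (ha : 0 ≤ a) (ha1 : a ≤ 1) (hc : 0 ≤ c)
    (hc1 : c ≤ 1) (hδ : 0 ≤ δ) (hab : a + b - 1 ≤ ab) (hbc : b + c - 1 ≤ bc)
    (hac : a + c - 1 ≤ ac) (hq : q + ac ≤ a) (hq' : q' + ac ≤ c)
    (h : ab ^ 2 ≤ a * (q + δ)) (h' : bc ^ 2 ≤ c * (q' + δ)) :
    a + b + c ≤ (3 + √2) / 2 + √δ := by
  have key : ∀ {s t r u : ℝ}, 0 ≤ s → s ≤ 1 → t ≤ 1 → r ≤ 1 - t → u ^ 2 ≤ s * (r + δ) →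
      u ≤ √(s * (1 - t)) + √δ := by
    intro s t r u hs hs1 ht hr hu
    refine (abs_le_of_sq_le_sq' ?_ (by positivity)).2
    have e1 := Real.sq_sqrt (mul_nonneg hs (sub_nonneg.2 ht))
    have e2 := Real.sq_sqrt hδ
    have e3 := mul_nonneg (Real.sqrt_nonneg (s * (1 - t))) (Real.sqrt_nonneg δ)
    nlinarith [mul_le_mul_of_nonneg_left hr hs, mul_le_mul_of_nonneg_right hs1 hδ]
  have k1 := key ha ha1 hc1 (by linarith) h
  have k2 := key hc hc1 ha1 (by linarith) h'
  linarith [trig_bound ha ha1 hc hc1]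

/-- The sum of the three layer densities is at most `(3 + √2)/2 + √δ`, if both `k₂ + 1` and
`n - k₂ + 1` are at least `1/δ`. -/
lemma three_layers {n : ℕ} {F : Finset (Finset (Fin n))} (hF : Q2Free F) {k₁ k₂ k₃ : ℕ}
    (h12 : k₁ < k₂) (h23 : k₂ < k₃) (h3 : k₃ ≤ n) {δ : ℝ} (hδ : 0 ≤ δ)
    (hlo : 1 ≤ δ * ((n - k₂ + 1 : ℕ) : ℝ)) (hup : 1 ≤ δ * ((k₂ + 1 : ℕ) : ℝ)) :
    ((hit F k₁).card + (hit F k₂).card + (hit F k₃).card : ℝ)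
      ≤ ((3 + √2) / 2 + √δ) * n.factorial := by
  obtain ⟨q, hq, h⟩ := lower_bound hF h12 h23 h3
  obtain ⟨q', hq', h'⟩ := upper_bound hF h12 h23 h3
  have hN : (0 : ℝ) < n.factorial := by exact_mod_cast n.factorial_pos
  have hcard : ∀ X : Finset (Equiv.Perm (Fin n)), X.card ≤ n.factorial := fun X => by
    simpa [Fintype.card_perm] using Finset.card_le_univ X
  have hone : ∀ X : Finset (Equiv.Perm (Fin n)), (X.card : ℝ) / n.factorial ≤ 1 := fun X => by
    rw [div_le_one hN]
    exact_mod_cast hcard X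
  have hie : ∀ X Y : Finset (Equiv.Perm (Fin n)), (X.card : ℝ) / n.factorial
      + Y.card / n.factorial - 1 ≤ (X ∩ Y).card / n.factorial := fun X Y => by
    have h1 := Finset.card_union_add_card_inter X Y
    have h2 := hcard (X ∪ Y)
    have h3 : (X.card : ℝ) + Y.card - n.factorial ≤ (X ∩ Y).card := by
      have : X.card + Y.card ≤ (X ∩ Y).card + n.factorial := by omega
      have : (X.card : ℝ) + Y.card ≤ (X ∩ Y).card + n.factorial := by exact_mod_cast this
      linarith
    have := div_le_div_of_nonneg_right h3 hN.le
    rwa [sub_div, add_div, div_self hN.ne'] at this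
  have hsum : ∀ {r s t : ℕ}, r + s ≤ t →
      (r : ℝ) / n.factorial + s / n.factorial ≤ t / n.factorial := fun {r s t} hrst => by
    rw [← add_div]
    gcongr
    exact_mod_cast hrst
  have hsq : ∀ {m p e r : ℕ}, 1 ≤ δ * (m : ℝ) → m * p ^ 2 ≤ e * (m * r + e) → e ≤ n.factorial →
      ((p : ℝ) / n.factorial) ^ 2 ≤ e / n.factorial * (r / n.factorial + δ) := by
    intro m p e r hm hp he
    have hm0 : (0 : ℝ) < m := by
      rcases Nat.eq_zero_or_pos m with h0 | h0
      · subst h0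
        norm_num at hm
      · exact_mod_cast h0
    have hp' : (m : ℝ) * p ^ 2 ≤ e * (m * r + e) := by exact_mod_cast hp
    have he' : (e : ℝ) ≤ n.factorial := by exact_mod_cast he
    have h1 : (e : ℝ) ≤ δ * m * n.factorial := by nlinarith
    have h2 : (m : ℝ) * p ^ 2 ≤ m * (e * (r + δ * n.factorial)) := by
      calc (m : ℝ) * p ^ 2 ≤ e * (m * r + e) := hp'
        _ ≤ e * (m * r + δ * m * n.factorial) := by gcongr
        _ = m * (e * (r + δ * n.factorial)) := by ring
    have h3 := le_of_mul_le_mul_left h2 hm0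
    have h4 : (e : ℝ) / n.factorial * (r / n.factorial + δ)
        = e * (r + δ * n.factorial) / n.factorial ^ 2 := by
      field_simp
    rw [h4, div_pow]
    gcongr
  have hfin := density_bound (δ := δ) (by positivity) (hone _) (by positivity) (hone _) hδ
    (hie (hit F k₁) (hit F k₂))
    (by have := hie (hit F k₃) (hit F k₂)
        linarith)
    (hie (hit F k₁) (hit F k₃)) (hsum hq) (by rw [Finset.inter_comm]; exact hsum hq')
    (hsq hlo h (hcard _)) (hsq hup h' (hcard _))
  rwa [← add_div, ← add_div, div_le_iff₀ hN] at hfin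

/-! ### From densities to sizes -/

/-- Layers at bounded distance from the bottom are negligible. -/
lemma choose_small {n k K : ℕ} {ε : ℝ} (hk : k < K) (hKn : K < n) (h : (K : ℝ) ≤ ε * (n - K : ℕ)) :
    (n.choose k : ℝ) ≤ ε * n.choose (n / 2) := by
  have hpos : (0 : ℝ) < (n - K : ℕ) := by
    have : 0 < n - K := by omega
    exact_mod_cast this
  have h1 : n.choose k * (n - K) ≤ n.choose (n / 2) * K := by
    calc n.choose k * (n - K) ≤ n.choose k * (n - k) := by gcongr
      _ = n.choose (k + 1) * (k + 1) := (Nat.choose_succ_right_eq n k).symm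
      _ ≤ n.choose (n / 2) * K := Nat.mul_le_mul (Nat.choose_le_middle _ _) hk
  have h2 : (n.choose k : ℝ) * (n - K : ℕ) ≤ n.choose (n / 2) * K := by exact_mod_cast h1
  refine le_of_mul_le_mul_right ?_ hpos
  calc (n.choose k : ℝ) * (n - K : ℕ) ≤ n.choose (n / 2) * K := h2
    _ ≤ n.choose (n / 2) * (ε * (n - K : ℕ)) := by gcongr
    _ = ε * n.choose (n / 2) * (n - K : ℕ) := by ring

lemma card_layer_le_choose {n : ℕ} (F : Finset (Finset (Fin n))) (k : ℕ) :
    (F.filter fun S => S.card = k).card ≤ n.choose k := by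
  have h : (F.filter fun S => S.card = k) ⊆ Finset.powersetCard k Finset.univ := fun S hS =>
    Finset.mem_powersetCard.2 ⟨Finset.subset_univ _, (Finset.mem_filter.1 hS).2⟩
  simpa using Finset.card_le_card h

/-- The number of members of size `k` is at most their density among the `k`-sets times the size of
the middle layer. -/
lemma card_layer_mul_factorial_le {n : ℕ} (F : Finset (Finset (Fin n))) {k : ℕ} (hk : k ≤ n) :
    (F.filter fun S => S.card = k).card * n.factorial ≤ (hit F k).card * n.choose (n / 2) := by
  rw [← card_hit_mul_choose F hk]
  exact Nat.mul_le_mul_left _ (Nat.choose_le_middle _ _)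

lemma exists_lt_of_card_eq_three {s : Finset ℕ} (hs : s.card = 3) :
    ∃ a b c, a < b ∧ b < c ∧ s = {a, b, c} := by
  let f := s.orderEmbOfFin hs
  refine ⟨f 0, f 1, f 2, f.strictMono (by decide), f.strictMono (by decide), ?_⟩
  have h := Finset.image_orderEmbOfFin_univ s hs
  conv_lhs => rw [← h, show (Finset.univ : Finset (Fin 3)) = {0, 1, 2} from rfl]
  rw [Finset.image_insert, Finset.image_insert, Finset.image_singleton]

/-- A `Q₂`-free family of subsets of `[n]` whose members have at most three different sizes
has at most `((3 + √2)/2 + o(1)) ⬝ C(n, ⌊n/2⌋)` members. -/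
theorem q2_three_sizes_upper_bound :
    ∀ ε : ℝ, 0 < ε → ∃ n₀ : ℕ, ∀ n : ℕ, n₀ ≤ n →
      ∀ F : Finset (Finset (Fin n)), Q2Free F →
        (F.image Finset.card).card ≤ 3 →
        (F.card : ℝ) ≤ ((3 + Real.sqrt 2) / 2 + ε) * (n.choose (n / 2)) := by
  intro ε hε
  -- the middle layer is near an end if it is within `K` of it; beyond `n = K + M`, layers that near
  -- an end have density at most `ε` relative to the largest layer
  obtain ⟨K, hK⟩ := exists_nat_ge (1 / ε ^ 2)
  obtain ⟨M, hM⟩ := exists_nat_ge ((K : ℝ) / ε)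
  refine ⟨K + M + 1, fun n hn F hF h3 => ?_⟩
  have hKε : 1 ≤ ε ^ 2 * (K : ℝ) := by
    rwa [div_le_iff₀ (by positivity), mul_comm] at hK
  have hKn : (K : ℝ) ≤ ε * (n - K : ℕ) := by
    rw [div_le_iff₀ hε, mul_comm] at hM
    have : (M : ℝ) ≤ (n - K : ℕ) := by exact_mod_cast (by omega : M ≤ n - K)
    nlinarith
  have hs2 : 1 ≤ √2 := Real.one_le_sqrt.2 (by norm_num)
  have hmid : (0 : ℝ) ≤ n.choose (n / 2) := by positivity
  have hlay : ∀ k, ((F.filter fun S => S.card = k).card : ℝ) ≤ n.choose (n / 2) := fun k => by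
    exact_mod_cast (card_layer_le_choose F k).trans (Nat.choose_le_middle _ _)
  have hcardF := Finset.card_eq_sum_card_image Finset.card F
  rcases Nat.lt_or_ge (F.image Finset.card).card 3 with h2 | h2
  · have h : (F.card : ℝ) ≤ (F.image Finset.card).card * (n.choose (n / 2) : ℝ) := by
      rw [hcardF, ← nsmul_eq_mul]
      push_cast
      exact Finset.sum_le_card_nsmul _ _ _ fun k _ => hlay k
    have h' : ((F.image Finset.card).card : ℝ) ≤ 2 := by exact_mod_cast (by omega)
    nlinarith
  · obtain ⟨k₁, k₂, k₃, h12, h23, him⟩ := exists_lt_of_card_eq_three (le_antisymm h3 h2)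
    have hk3 : k₃ ≤ n := by
      have : k₃ ∈ F.image Finset.card := by rw [him]; simp
      obtain ⟨S, -, hS⟩ := Finset.mem_image.1 this
      rw [← hS]
      simpa using Finset.card_le_univ S
    rw [him, Finset.sum_insert (by simp; omega), Finset.sum_insert (by simp; omega),
      Finset.sum_singleton] at hcardF
    by_cases hmidK : K ≤ n - k₂ + 1 ∧ K ≤ k₂ + 1
    · have hlo : 1 ≤ ε ^ 2 * ((n - k₂ + 1 : ℕ) : ℝ) :=
        hKε.trans (by gcongr; exact_mod_cast hmidK.1)
      have hup : 1 ≤ ε ^ 2 * ((k₂ + 1 : ℕ) : ℝ) :=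
        hKε.trans (by gcongr; exact_mod_cast hmidK.2)
      have key := three_layers hF h12 h23 hk3 (by positivity) hlo hup
      rw [Real.sqrt_sq hε.le] at key
      have hN : (0 : ℝ) < n.factorial := by exact_mod_cast n.factorial_pos
      refine le_of_mul_le_mul_right ?_ hN
      have hle : F.card * n.factorial
          ≤ ((hit F k₁).card + (hit F k₂).card + (hit F k₃).card) * n.choose (n / 2) := by
        have e1 := card_layer_mul_factorial_le F (show k₁ ≤ n by omega)
        have e2 := card_layer_mul_factorial_le F (show k₂ ≤ n by omega)
        have e3 := card_layer_mul_factorial_le F hk3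
        rw [hcardF]
        linarith
      calc (F.card : ℝ) * n.factorial
          ≤ ((hit F k₁).card + (hit F k₂).card + (hit F k₃).card) * n.choose (n / 2) := by
            exact_mod_cast hle
        _ ≤ ((3 + √2) / 2 + ε) * n.factorial * n.choose (n / 2) := by gcongr
        _ = ((3 + √2) / 2 + ε) * n.choose (n / 2) * n.factorial := by ring
    · have hsmall : (n.choose k₂ : ℝ) ≤ ε * n.choose (n / 2) := by
        by_cases hk : k₂ < K
        · exact choose_small hk (by omega) hKn
        · rw [← Nat.choose_symm (show k₂ ≤ n by omega)]
          exact choose_small (show n - k₂ < K by omega) (by omega) hKn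
      have e1 := hlay k₁
      have e3 := hlay k₃
      have e2 : ((F.filter fun S => S.card = k₂).card : ℝ) ≤ n.choose k₂ := by
        exact_mod_cast card_layer_le_choose F k₂
      have hc : (F.card : ℝ) = (F.filter fun S => S.card = k₁).card
          + ((F.filter fun S => S.card = k₂).card + (F.filter fun S => S.card = k₃).card) := by
        exact_mod_cast hcardF
      nlinarith
end

section
/- For every ε > 0 there exists n₀ such that for all n ≥ n₀ and every integer k with |k − n/2| ≤ n^{2/3} and 1 ≤ k ≤ n − 1: if 𝐅 is a Q₂-free family of subsets of [n] in which every member has size k − 1, k, or k + 1, then |𝐅| ≤ ((3 + √2)/2 + ε)·C(n, k). -/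
open Finset

/-! ### Counting inclusions between layers -/

/-- In a ground set of size `N`, a set of size `i` has `C(N - i, d)` supersets of size `i + d`. -/
lemma card_supersets {α : Type*} [Fintype α] [DecidableEq α] {A : Finset α} {i d : ℕ}
    (hA : #A = i) :
    #{D ∈ powersetCard (i + d) (univ : Finset α) | A ⊆ D} = (Fintype.card α - i).choose d := by
  rw [← hA, ← card_compl, ← card_powersetCard]
  refine card_bij' (fun D _ => D \ A) (fun E _ => A ∪ E) ?_ ?_ ?_ ?_
  · intro D hD
    simp only [mem_filter, mem_powersetCard, subset_univ, true_and] at hD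
    rw [mem_powersetCard, card_sdiff_of_subset hD.2]
    refine ⟨fun x hx => ?_, by omega⟩
    simpa using (mem_sdiff.1 hx).2
  · intro E hE
    rw [mem_powersetCard] at hE
    have hd : Disjoint A E := disjoint_left.2 fun x hx hx' => by simpa [hx] using hE.1 hx'
    simp [card_union_of_disjoint hd, hE.2]
  · intro D hD
    simp only [mem_filter] at hD
    exact union_sdiff_of_subset hD.2
  · intro E hE
    rw [mem_powersetCard] at hE
    have hd : Disjoint A E := disjoint_left.2 fun x hx hx' => by simpa [hx] using hE.1 hx'
    exact union_sdiff_cancel_left hd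

/-- Each of the families `𝒜`, `𝒟` is incident to a fixed number of pairs `A ⊆ D` of sets of sizes
`i` and `i + d`, and by inclusion–exclusion many pairs have both ends in the families. -/
lemma card_add_card_le_incidences {α : Type*} [Fintype α] [DecidableEq α] {i d : ℕ}
    {𝒜 𝒟 : Finset (Finset α)} (h𝒜 : 𝒜 ⊆ powersetCard i univ)
    (h𝒟 : 𝒟 ⊆ powersetCard (i + d) univ) :
    #𝒜 * (Fintype.card α - i).choose d + #𝒟 * (i + d).choose i
      ≤ ∑ A ∈ 𝒜, #{D ∈ 𝒟 | A ⊆ D}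
        + (Fintype.card α).choose i * (Fintype.card α - i).choose d := by
  have hdown : ∑ D ∈ 𝒟, #{A ∈ powersetCard i (univ : Finset α) | A ⊆ D}
      = #𝒟 * (i + d).choose i := by
    rw [← smul_eq_mul, ← sum_const]
    refine sum_congr rfl fun D hD => ?_
    rw [← (mem_powersetCard.1 (h𝒟 hD)).2, ← card_powersetCard]
    congr 1
    ext A
    simp [mem_powersetCard, and_comm]
  have hswap := sum_card_bipartiteAbove_eq_sum_card_bipartiteBelow
    (s := powersetCard i (univ : Finset α)) (t := 𝒟) (fun A D => A ⊆ D)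
  simp only [bipartiteAbove, bipartiteBelow] at hswap
  have hout : ∑ A ∈ powersetCard i (univ : Finset α) \ 𝒜, #{D ∈ 𝒟 | A ⊆ D}
      ≤ #(powersetCard i (univ : Finset α) \ 𝒜) * (Fintype.card α - i).choose d := by
    rw [← smul_eq_mul]
    refine sum_le_card_nsmul _ _ _ fun A hA => ?_
    rw [← card_supersets (mem_powersetCard.1 (mem_sdiff.1 hA).1).2]
    exact card_le_card (filter_subset_filter _ h𝒟)
  have hcard := card_sdiff_add_card_eq_card h𝒜
  rw [card_powersetCard, card_univ] at hcard
  rw [← hdown, ← hswap, ← sum_sdiff h𝒜, ← hcard, add_mul]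
  omega

/-- A pair `{x, y}` outside `A` with `A ∪ {x}` and `A ∪ {y}` both in `F` cannot have `A ∪ {x, y}`
in `F`. -/
lemma card_up_two_add_choose_le {α : Type*} [Fintype α] [DecidableEq α]
    {F : Finset (Finset α)} (hF : Q2Free F) {i : ℕ} {A : Finset α} (hA : A ∈ F.slice i) :
    #{D ∈ F.slice (i + 2) | A ⊆ D} + (#{B ∈ F.slice (i + 1) | A ⊆ B}).choose 2
      ≤ (Fintype.card α - i).choose 2 := by
  obtain ⟨hAF, hAi⟩ := mem_slice.1 hA
  set S : Finset α := {x ∈ Aᶜ | insert x A ∈ F} with hS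
  have hU : #{B ∈ F.slice (i + 1) | A ⊆ B} ≤ #S := by
    refine (card_le_card (t := S.image fun x => insert x A) fun B hB => ?_).trans card_image_le
    simp only [mem_filter, mem_slice] at hB
    obtain ⟨⟨hBF, hBi⟩, hAB⟩ := hB
    have h1 : #(B \ A) = 1 := by rw [card_sdiff_of_subset hAB]; omega
    obtain ⟨x, hx⟩ := card_eq_one.1 h1
    have hxB : insert x A = B := by
      rw [insert_eq, ← hx, sdiff_union_of_subset hAB]
    have hxA : x ∉ A := (mem_sdiff.1 (hx ▸ mem_singleton_self x : x ∈ B \ A)).2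
    exact mem_image.2 ⟨x, by simp [hS, hxA, hxB, hBF], hxB⟩
  have hV : #{D ∈ F.slice (i + 2) | A ⊆ D} ≤ #(powersetCard 2 Aᶜ \ powersetCard 2 S) := by
    refine card_le_card_of_injOn (fun D => D \ A) ?_ ?_
    · intro D hD
      simp only [coe_filter, mem_slice, Set.mem_ofPred_eq] at hD
      obtain ⟨⟨hDF, hDi⟩, hAD⟩ := hD
      have h2 : #(D \ A) = 2 := by rw [card_sdiff_of_subset hAD]; omega
      simp only [coe_sdiff, Set.mem_sdiff, mem_coe, mem_powersetCard, h2, and_true]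
      refine ⟨fun x hx => by simpa using (mem_sdiff.1 hx).2, fun hsub => ?_⟩
      obtain ⟨x, y, hxy, hDxy⟩ := card_eq_two.1 h2
      have hx : x ∈ D \ A := by simp [hDxy]
      have hy : y ∈ D \ A := by simp [hDxy]
      have hxS := (mem_filter.1 (hsub hx)).2
      have hyS := (mem_filter.1 (hsub hy)).2
      rw [mem_sdiff] at hx hy
      have cx := card_insert_of_notMem hx.2
      have cy := card_insert_of_notMem hy.2
      refine hF ⟨A, insert x A, insert y A, D, hAF, hxS, hyS, hDF, ?_, ?_, ?_, ?_, ?_, ?_,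
        subset_insert _ _, insert_subset hx.1 hAD, subset_insert _ _, insert_subset hy.1 hAD⟩
      · intro h; rw [← h] at cx; omega
      · intro h; rw [← h] at cy; omega
      · rintro rfl; omega
      · intro h
        have : x ∈ insert y A := h ▸ mem_insert_self x A
        simp [hxy, hx.2] at this
      · intro h; rw [h] at cx; omega
      · intro h; rw [h] at cy; omega
    · intro D hD E hE hDE
      simp only [coe_filter, Set.mem_ofPred_eq] at hD hE
      rw [← sdiff_union_of_subset hD.2, ← sdiff_union_of_subset hE.2]
      exact congrArg (· ∪ A) hDE
  have hsub : powersetCard 2 S ⊆ powersetCard 2 Aᶜ := powersetCard_mono (filter_subset _ _)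
  have hcard := card_sdiff_add_card_eq_card hsub
  rw [card_powersetCard, card_powersetCard, card_compl, hAi] at hcard
  have := Nat.choose_le_choose 2 hU
  omega

/-! ### Layer densities -/

/-- The proportion of the `r`-element subsets of the ground set that belong to `F`. It is
`0 / 0 = 0` when `r` exceeds the size of the ground set. -/
noncomputable def layerDensity {α : Type*} [Fintype α] (F : Finset (Finset α)) (r : ℕ) : ℝ :=
  #(F.slice r) / (Fintype.card α).choose r

lemma layerDensity_nonneg {α : Type*} [Fintype α] (F : Finset (Finset α)) (r : ℕ) :
    0 ≤ layerDensity F r := by unfold layerDensity; positivity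

lemma layerDensity_le_one {α : Type*} [Fintype α] (F : Finset (Finset α)) (r : ℕ) :
    layerDensity F r ≤ 1 := by
  refine div_le_one_of_le₀ ?_ (by positivity)
  exact_mod_cast (sized_slice (𝒜 := F) (r := r)).card_le

lemma card_slice_eq {α : Type*} [Fintype α] (F : Finset (Finset α)) {r : ℕ}
    (hr : r ≤ Fintype.card α) :
    (#(F.slice r) : ℝ) = layerDensity F r * (Fintype.card α).choose r := by
  have : ((Fintype.card α).choose r : ℝ) ≠ 0 := by exact_mod_cast (Nat.choose_pos hr).ne'
  rw [layerDensity, div_mul_cancel₀ _ this]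

lemma layerDensity_compls {α : Type*} [Fintype α] [DecidableEq α] (F : Finset (Finset α))
    {r s : ℕ} (h : r + s = Fintype.card α) :
    layerDensity F.compls r = layerDensity F s := by
  have hs : F.compls.slice r = (F.slice s).compls := by
    ext A
    simp only [mem_slice, mem_compls, card_compl]
    have := card_le_univ A
    constructor <;> rintro ⟨h1, h2⟩ <;> exact ⟨h1, by omega⟩
  rw [layerDensity, layerDensity, hs, card_compls, Nat.choose_symm_of_eq_add h.symm]

lemma Q2Free.compls {α : Type*} [Fintype α] [DecidableEq α] {F : Finset (Finset α)}
    (hF : Q2Free F) : Q2Free F.compls := by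
  rintro ⟨A, B, C, D, hA, hB, hC, hD, hAB, hAC, hAD, hBC, hBD, hCD, sAB, sBD, sAC, sCD⟩
  rw [mem_compls] at hA hB hC hD
  exact hF ⟨Dᶜ, Bᶜ, Cᶜ, Aᶜ, hD, hB, hC, hA, by simpa using hBD.symm, by simpa using hCD.symm,
    by simpa using hAD.symm, by simpa using hBC, by simpa using hAB.symm, by simpa using hAC.symm,
    compl_subset_compl.2 sBD, compl_subset_compl.2 sAB, compl_subset_compl.2 sCD,
    compl_subset_compl.2 sAC⟩

/-- The Cauchy–Schwarz step: `P` and `Q` stand for the sums of `u(A)` and of `u(A)²` over the `a N`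
members `A` of the lowest layer, which has `N` sets in all, where `0 ≤ u(A) ≤ m`. The term
`√(1 / m)` pays for replacing `u (u - 1)` by `u²`. -/
lemma le_of_moments {a b c N m P Q : ℝ} (ha0 : 0 ≤ a) (ha1 : a ≤ 1) (hc1 : c ≤ 1)
    (hN0 : 0 < N) (hm0 : 0 < m) (hlow : (a + b - 1) * (N * m) ≤ P)
    (hsq : Q - P ≤ (1 - c) * N * (m * (m - 1))) (hup : P ≤ N * m) (hCS : P ^ 2 ≤ a * N * Q) :
    a + b - 1 ≤ √(a * (1 - c)) + √(1 / m) := by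
  have hc := sub_nonneg.2 hc1
  have hmain : P ^ 2 ≤ (N * m) ^ 2 * (a * (1 - c) + 1 / m) := by
    have h1 : Q ≤ (1 - c) * N * m ^ 2 + N * m := by
      have : 0 ≤ (1 - c) * N * m := by positivity
      linarith
    calc P ^ 2 ≤ a * N * ((1 - c) * N * m ^ 2 + N * m) := hCS.trans (by gcongr)
      _ = (N * m) ^ 2 * (a * (1 - c)) + a * (N ^ 2 * m) := by ring
      _ ≤ (N * m) ^ 2 * (a * (1 - c)) + 1 * (N ^ 2 * m) := by gcongr
      _ = _ := by field_simp
  have hx : 0 ≤ a * (1 - c) := mul_nonneg ha0 hc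
  have hroot : P ≤ N * m * (√(a * (1 - c)) + √(1 / m)) := by
    have hs1 := Real.sqrt_nonneg (a * (1 - c))
    have hs2 := Real.sqrt_nonneg (1 / m)
    refine le_of_sq_le_sq (hmain.trans ?_) (by positivity)
    rw [mul_pow (N * m)]
    gcongr
    nlinarith [Real.sq_sqrt hx, Real.sq_sqrt (one_div_pos.2 hm0).le, mul_nonneg hs1 hs2]
  exact le_of_mul_le_mul_right ((hlow.trans hroot).trans_eq (mul_comm _ _)) (by positivity)

/-- The inequality `a + b - 1 ≤ √(a (1 - c)) + o(1)` between the densities of a `Q₂`-free family in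
three consecutive layers. -/
lemma layerDensity_add_le {α : Type*} [Fintype α] [DecidableEq α] {F : Finset (Finset α)}
    (hF : Q2Free F) {i j : ℕ} (hn : Fintype.card α = i + j + 2) :
    layerDensity F i + layerDensity F (i + 1) - 1
      ≤ √(layerDensity F i * (1 - layerDensity F (i + 2))) + √(1 / (j + 2)) := by
  set a := layerDensity F i with ha
  set b := layerDensity F (i + 1) with hb
  set c := layerDensity F (i + 2) with hc
  have ha0 : 0 ≤ a := layerDensity_nonneg F i
  have ha1 : a ≤ 1 := layerDensity_le_one F i
  have hc1 : c ≤ 1 := layerDensity_le_one F (i + 2)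
  set n := Fintype.card α with hnn
  set N : ℝ := (n.choose i : ℝ) with hN
  set m : ℝ := j + 2 with hm
  have hN0 : 0 < N := Nat.cast_pos.2 (Nat.choose_pos (by omega))
  have hm0 : 0 < m := by positivity
  have hni : n - i = j + 2 := by omega
  set u : Finset α → ℕ := fun A => #{B ∈ F.slice (i + 1) | A ⊆ B} with hu
  have hslice : ∀ r, F.slice r ⊆ powersetCard r univ := fun r A hA =>
    mem_powersetCard.2 ⟨subset_univ _, (mem_slice.1 hA).2⟩
  have hea : (#(F.slice i) : ℝ) = a * N := card_slice_eq F (by omega)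
  have heb : (#(F.slice (i + 1)) : ℝ) = b * n.choose (i + 1) := card_slice_eq F (by omega)
  have hec : (#(F.slice (i + 2)) : ℝ) = c * n.choose (i + 2) := card_slice_eq F (by omega)
  set P : ℝ := ∑ A ∈ F.slice i, (u A : ℝ) with hP
  -- Lower bound for the incidences between the two lower layers.
  have hlow : (a + b - 1) * (N * m) ≤ P := by
    have h := card_add_card_le_incidences (hslice i) (hslice (i + 1))
    rw [← hnn, hni, Nat.choose_one_right, Nat.choose_succ_self_right] at h
    have hid := Nat.choose_succ_right_eq n i
    rw [hni] at hid
    have h' : (#(F.slice i) : ℝ) * (j + 2) + #(F.slice (i + 1)) * (i + 1)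
        ≤ P + N * (j + 2) := by rw [hP, hN]; exact_mod_cast h
    have hid' : (n.choose (i + 1) : ℝ) * (i + 1) = N * (j + 2) := by rw [hN]; exact_mod_cast hid
    rw [hea, heb, mul_assoc b, hid'] at h'
    rw [hm]; linarith
  -- At most `(1 - c) N C(m, 2)` pairs of middle sets lie above a common member of the lowest layer.
  have hsq : ∑ A ∈ F.slice i, (u A : ℝ) ^ 2 - P ≤ (1 - c) * N * (m * (m - 1)) := by
    have h := card_add_card_le_incidences (hslice i) (hslice (i + 2))
    have h2 := sum_le_card_nsmul (F.slice i) _ _ fun A hA => card_up_two_add_choose_le hF hA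
    rw [sum_add_distrib, smul_eq_mul] at h2
    rw [← hnn, hni] at h h2
    have h3 : #(F.slice (i + 2)) * (i + 2).choose i + ∑ A ∈ F.slice i, (u A).choose 2
        ≤ n.choose i * (j + 2).choose 2 := by
      simp only [hu]; omega
    have hid : n.choose (i + 2) * (i + 2).choose i = n.choose i * (j + 2).choose 2 := by
      rw [Nat.choose_mul (by omega), hni]; simp
    have h3' : (#(F.slice (i + 2)) : ℝ) * (i + 2).choose i
        + ∑ A ∈ F.slice i, ((u A).choose 2 : ℝ) ≤ N * (j + 2).choose 2 := by
      rw [hN]; exact_mod_cast h3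
    have hid' : (n.choose (i + 2) : ℝ) * (i + 2).choose i = N * (j + 2).choose 2 := by
      rw [hN]; exact_mod_cast hid
    rw [hec, mul_assoc c, hid'] at h3'
    simp only [Nat.cast_choose_two] at h3'
    push_cast at h3'
    rw [← hm] at h3'
    have h4 : ∑ A ∈ F.slice i, ((u A : ℝ) * (u A - 1) / 2)
        = (∑ A ∈ F.slice i, (u A : ℝ) ^ 2 - P) / 2 := by
      rw [hP, ← sum_sub_distrib, sum_div]
      exact sum_congr rfl fun A _ => by ring
    rw [h4] at h3'
    linarith
  have hup : P ≤ N * m := by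
    have h : P ≤ #(F.slice i) • m := by
      refine sum_le_card_nsmul _ _ _ fun A hA => ?_
      have h := card_le_card (filter_subset_filter (A ⊆ ·) (hslice (i + 1)))
      rw [card_supersets (mem_slice.1 hA).2, ← hnn, hni, Nat.choose_one_right] at h
      rw [hm]; exact_mod_cast h
    rw [nsmul_eq_mul, hea] at h
    nlinarith [mul_pos hN0 hm0]
  exact le_of_moments ha0 ha1 hc1 hN0 hm0 hlow hsq hup
    (hea ▸ sq_sum_le_card_mul_sum_sq)

/-! ### Optimising the densities -/

/-- With `x = √(a (1 - c))`, `y = √(c (1 - a))` and `s = a + c - 1`, the AM–GM inequality gives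
`s² + (x + y)² ≤ 1`, hence `s + x + y ≤ √2`. -/
lemma sum_le_of_sqrt_bounds {a b c t : ℝ} (ha0 : 0 ≤ a) (ha1 : a ≤ 1) (hc0 : 0 ≤ c) (hc1 : c ≤ 1)
    (h1 : a + b - 1 ≤ √(a * (1 - c)) + t) (h2 : c + b - 1 ≤ √(c * (1 - a)) + t) :
    a + b + c ≤ (3 + √2) / 2 + t := by
  set x := √(a * (1 - c)) with hx
  set y := √(c * (1 - a)) with hy
  have hx2 : x ^ 2 = a * (1 - c) := Real.sq_sqrt (mul_nonneg ha0 (by linarith))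
  have hy2 : y ^ 2 = c * (1 - a) := Real.sq_sqrt (mul_nonneg hc0 (by linarith))
  have hxy : 2 * (x * y) ≤ a * (1 - a) + c * (1 - c) := by
    have h : x * y = √(a * (1 - a)) * √(c * (1 - c)) := by
      rw [hx, hy, ← Real.sqrt_mul (mul_nonneg ha0 (by linarith)),
        ← Real.sqrt_mul (mul_nonneg ha0 (by linarith))]
      congr 1; ring
    have e1 := Real.sq_sqrt (mul_nonneg ha0 (sub_nonneg.2 ha1))
    have e2 := Real.sq_sqrt (mul_nonneg hc0 (sub_nonneg.2 hc1))
    nlinarith [sq_nonneg (√(a * (1 - a)) - √(c * (1 - c)))]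
  have hfin : (a + c - 1) + (x + y) ≤ √2 := by
    apply Real.le_sqrt_of_sq_le
    nlinarith [sq_nonneg ((a + c - 1) - (x + y))]
  linarith

lemma Q2Free.layerDensity_sum_le {α : Type*} [Fintype α] [DecidableEq α] {F : Finset (Finset α)}
    (hF : Q2Free F) {i j : ℕ} (hn : Fintype.card α = i + j + 2) {t : ℝ}
    (hi : √(1 / (i + 2)) ≤ t) (hj : √(1 / (j + 2)) ≤ t) :
    layerDensity F i + layerDensity F (i + 1) + layerDensity F (i + 2) ≤ (3 + √2) / 2 + t := by
  have h1 := layerDensity_add_le hF hn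
  have h2 := layerDensity_add_le hF.compls (i := j) (j := i) (by omega)
  rw [layerDensity_compls F (s := i + 2) (by omega), layerDensity_compls F (s := i + 1) (by omega),
    layerDensity_compls F (s := i) (by omega)] at h2
  exact sum_le_of_sqrt_bounds (layerDensity_nonneg _ _) (layerDensity_le_one _ _)
    (layerDensity_nonneg _ _) (layerDensity_le_one _ _) (by linarith) (by linarith)

/-! ### Asymptotics near the middle layer -/

lemma choose_le_of_near_middle {i j : ℕ} {θ : ℝ} (hθ0 : 0 < θ) (hθ : θ ≤ 1 / 4)
    (h : |((i + 1 : ℕ) : ℝ) - (i + j + 2 : ℕ) / 2| ≤ θ * (i + j + 2 : ℕ)) :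
    ((i + j + 2).choose i : ℝ) ≤ (1 + 8 * θ) * (i + j + 2).choose (i + 1) ∧
    ((i + j + 2).choose (i + 2) : ℝ) ≤ (1 + 8 * θ) * (i + j + 2).choose (i + 1) := by
  have e1 : (i + j + 2).choose (i + 1) * (i + 1) = (i + j + 2).choose i * (j + 2) := by
    rw [Nat.choose_succ_right_eq]; congr 1; omega
  have e2 : (i + j + 2).choose (i + 2) * (i + 2) = (i + j + 2).choose (i + 1) * (j + 1) := by
    rw [Nat.choose_succ_right_eq]; congr 1; omega
  have e1' : ((i + j + 2).choose (i + 1) : ℝ) * (i + 1) = (i + j + 2).choose i * (j + 2) := by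
    exact_mod_cast e1
  have e2' : ((i + j + 2).choose (i + 2) : ℝ) * (i + 2) = (i + j + 2).choose (i + 1) * (j + 1) := by
    exact_mod_cast e2
  obtain ⟨h1, h2⟩ := abs_le.1 h
  push_cast at h1 h2
  have hi : (0 : ℝ) ≤ i := i.cast_nonneg
  have hj : (0 : ℝ) ≤ j := j.cast_nonneg
  have hc : (0 : ℝ) ≤ (i + j + 2).choose (i + 1) := by positivity
  have k1 : (i : ℝ) + 1 ≤ (1 + 8 * θ) * (j + 2) := by nlinarith
  have k2 : (j : ℝ) + 1 ≤ (1 + 8 * θ) * (i + 2) := by nlinarith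
  constructor
  · refine le_of_mul_le_mul_right (a := (j : ℝ) + 2) ?_ (by positivity)
    rw [← e1']; nlinarith
  · refine le_of_mul_le_mul_right (a := (i : ℝ) + 2) ?_ (by positivity)
    rw [e2']; nlinarith

lemma near_middle_bounds {θ : ℝ} (hθ0 : 0 < θ) (hθ : θ ≤ 1 / 4) {n : ℕ} (hn : 4 / θ ^ 3 ≤ n) :
    (n : ℝ) ^ ((2 : ℝ) / 3) ≤ θ * n ∧ 1 / θ ^ 2 ≤ n / 4 := by
  have hθ3 : 0 < θ ^ 3 := by positivity
  have h4 : 4 ≤ n * θ ^ 3 := (div_le_iff₀ hθ3).1 hn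
  have hn0 : (0 : ℝ) ≤ n := n.cast_nonneg
  constructor
  · refine le_of_pow_le_pow_left₀ (n := 3) (by norm_num) (by positivity) ?_
    rw [← Real.rpow_natCast, ← Real.rpow_mul hn0]
    norm_num
    nlinarith [sq_nonneg (n : ℝ)]
  · rw [div_le_iff₀ (by positivity)]
    nlinarith [mul_nonneg hn0 (sq_nonneg θ)]

/-- A `Q₂`-free family occupying three consecutive layers `k-1, k, k+1` near the middle
has at most `((3 + √2)/2 + o(1)) ⬝ C(n, k)` members. -/
theorem q2_three_consecutive_layers_upper_bound :
    ∀ ε : ℝ, 0 < ε → ∃ n₀ : ℕ, ∀ n : ℕ, n₀ ≤ n →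
      ∀ k : ℕ, |(k : ℝ) - n / 2| ≤ (n : ℝ) ^ ((2 : ℝ) / 3) → 1 ≤ k → k ≤ n - 1 →
        ∀ F : Finset (Finset (Fin n)), Q2Free F →
          (∀ A ∈ F, A.card = k - 1 ∨ A.card = k ∨ A.card = k + 1) →
          (F.card : ℝ) ≤ ((3 + Real.sqrt 2) / 2 + ε) * (n.choose k) := by
  intro ε hε
  -- The final estimate is `(K + θ) (1 + 8 θ) ≤ K + 27 θ` with `K = (3 + √2) / 2 < 9 / 4`.
  set θ := min (1 / 4) (ε / 27) with hθdef
  have hθ0 : 0 < θ := by positivity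
  have hθ : θ ≤ 1 / 4 := min_le_left _ _
  have hθε : 27 * θ ≤ ε := by have := min_le_right (1 / 4) (ε / 27); linarith
  refine ⟨⌈4 / θ ^ 3⌉₊, fun n hn k hk hk1 hkn F hF hcard => ?_⟩
  obtain ⟨hpow, hbig⟩ := near_middle_bounds hθ0 hθ (Nat.ceil_le.1 hn)
  obtain ⟨i, rfl⟩ : ∃ i, k = i + 1 := ⟨k - 1, by omega⟩
  obtain ⟨j, rfl⟩ : ∃ j, n = i + j + 2 := ⟨n - i - 2, by omega⟩
  have hmid := hk.trans hpow
  obtain ⟨hc1, hc2⟩ := choose_le_of_near_middle hθ0 hθ hmid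
  have hsqrt : ∀ r : ℝ, ((i + j + 2 : ℕ) : ℝ) / 4 ≤ r → √(1 / r) ≤ θ := by
    intro r hr
    have h1 : 1 / θ ^ 2 ≤ r := hbig.trans hr
    refine Real.sqrt_le_iff.2 ⟨hθ0.le, ?_⟩
    exact (one_div_le (by positivity) (lt_of_lt_of_le (by positivity) h1)).1 h1
  obtain ⟨m1, m2⟩ := abs_le.1 hmid
  have hsum := hF.layerDensity_sum_le (i := i) (j := j) (t := θ) (by simp)
    (hsqrt _ (by push_cast at *; nlinarith)) (hsqrt _ (by push_cast at *; nlinarith))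
  have hFcard : (#F : ℝ) = #(F.slice i) + #(F.slice (i + 1)) + #(F.slice (i + 2)) := by
    have hU : F = (F.slice i ∪ F.slice (i + 1)) ∪ F.slice (i + 2) := by
      ext A
      simp only [mem_union, mem_slice]
      constructor
      · intro hA
        rcases hcard A hA with h | h | h <;> simp_all
      · tauto
    have hd : ∀ r s, r ≠ s → Disjoint (F.slice r) (F.slice s) := fun r s hrs =>
      disjoint_left.2 fun A h1 h2 => hrs ((mem_slice.1 h1).2.symm.trans (mem_slice.1 h2).2)
    conv_lhs => rw [hU]
    rw [card_union_of_disjoint (disjoint_union_left.2 ⟨hd _ _ (by omega), hd _ _ (by omega)⟩),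
      card_union_of_disjoint (hd _ _ (by omega))]
    push_cast; ring
  rw [hFcard, card_slice_eq F (by simp; omega), card_slice_eq F (by simp; omega),
    card_slice_eq F (by simp), Fintype.card_fin]
  set C : ℝ := ((i + j + 2).choose (i + 1) : ℝ) with hC
  have hC0 : 0 ≤ C := by positivity
  have hs2 : √2 ≤ 3 / 2 := Real.sqrt_le_iff.2 ⟨by norm_num, by norm_num⟩
  have a0 := layerDensity_nonneg F i
  have b0 := layerDensity_nonneg F (i + 1)
  have c0 := layerDensity_nonneg F (i + 2)
  calc _ ≤ layerDensity F i * ((1 + 8 * θ) * C) + layerDensity F (i + 1) * ((1 + 8 * θ) * C)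
        + layerDensity F (i + 2) * ((1 + 8 * θ) * C) := by
        gcongr
        nlinarith
    _ = (layerDensity F i + layerDensity F (i + 1) + layerDensity F (i + 2))
        * (1 + 8 * θ) * C := by ring
    _ ≤ ((3 + √2) / 2 + θ) * (1 + 8 * θ) * C := by gcongr
    _ ≤ ((3 + √2) / 2 + ε) * C := by
        gcongr
        nlinarith
end

section
/- Let 𝐅 be a Q₂-free family of subsets of [n]. For i = 1, 2, 3 let Υⁱ be the set of full chains in Q_n containing exactly i members of 𝐅. Then every full chain contains at most 3 members of 𝐅, and ⌊n/2⌋!·⌈n/2⌉!·|𝐅| ≤ 2·n! + |Υ³| − |Υ¹|; equivalently, |𝐅| ≤ (2 + (|Υ³| − |Υ¹|)/n!)·C(n, ⌊n/2⌋). -/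
/-- The set of full (maximal) chains in the Boolean lattice `Q_n`: families of `n + 1`
pairwise comparable subsets of `[n]` (hence of all sizes `0, 1, …, n`). -/
def fullChains (n : ℕ) : Finset (Finset (Finset (Fin n))) :=
  Finset.univ.filter fun σ => σ.card = n + 1 ∧ ∀ A ∈ σ, ∀ B ∈ σ, A ⊆ B ∨ B ⊆ A

/-- The set of full chains in `Q_n` containing exactly `i` members of `F`. -/
def chainsWith (n : ℕ) (F : Finset (Finset (Fin n))) (i : ℕ) :
    Finset (Finset (Finset (Fin n))) :=
  (fullChains n).filter fun σ => (σ ∩ F).card = i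

/-! ### Full chains and numberings -/

open Numbering in
/-- The full chain attached to a numbering: the family of all its prefixes. -/
def chainOf {n : ℕ} (f : Numbering (Fin n)) : Finset (Finset (Fin n)) :=
  Finset.univ.filter fun s => IsPrefix f s

lemma mem_chainOf {n : ℕ} {f : Numbering (Fin n)} {s : Finset (Fin n)} :
    s ∈ chainOf f ↔ Numbering.IsPrefix f s := by
  simp [chainOf]

/-- The `k`-th prefix of a numbering has exactly `k` elements. -/
lemma card_initial {n : ℕ} (f : Numbering (Fin n)) {k : ℕ} (hk : k ≤ n) :
    (Finset.univ.filter fun x => (f x : ℕ) < k).card = k := by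
  have h : (Finset.univ.filter fun x => (f x : ℕ) < k).map f.toEmbedding
      = Finset.univ.filter fun i : Fin (Fintype.card (Fin n)) => (i : ℕ) < k := by
    ext i
    simp only [Finset.mem_map, Finset.mem_filter, Finset.mem_univ, true_and]
    constructor
    · rintro ⟨x, hx, rfl⟩
      exact hx
    · intro hi
      exact ⟨f.symm i, by simpa using hi, by simp⟩
  rw [← Finset.card_map f.toEmbedding, h, Fin.card_filter_val_lt]
  simpa using hk

lemma initial_mem_chainOf {n : ℕ} (f : Numbering (Fin n)) {k : ℕ} (hk : k ≤ n) :
    (Finset.univ.filter fun x => (f x : ℕ) < k) ∈ chainOf f := by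
  rw [mem_chainOf]
  intro x
  rw [card_initial f hk]
  simp

lemma card_injOn_of_chain {α : Type*} {σ : Finset (Finset α)}
    (h : ∀ A ∈ σ, ∀ B ∈ σ, A ⊆ B ∨ B ⊆ A) :
    Set.InjOn Finset.card (σ : Set (Finset α)) := by
  intro A hA B hB hAB
  rcases h A hA B hB with h | h
  · exact Finset.eq_of_subset_of_card_le h hAB.ge
  · exact (Finset.eq_of_subset_of_card_le h hAB.le).symm

/-- The members of a full chain take each size `0, …, n` exactly once. -/
lemma image_card_eq {n : ℕ} {σ : Finset (Finset (Fin n))} (hσ : σ ∈ fullChains n) :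
    σ.image Finset.card = Finset.range (n + 1) := by
  simp only [fullChains, Finset.mem_filter, Finset.mem_univ, true_and] at hσ
  apply Finset.eq_of_subset_of_card_le
  · intro k hk
    obtain ⟨A, _, rfl⟩ := Finset.mem_image.1 hk
    have := Finset.card_le_univ A
    simp only [Fintype.card_fin] at this
    simpa [Nat.lt_succ_iff] using this
  · rw [Finset.card_image_of_injOn (card_injOn_of_chain hσ.2), hσ.1, Finset.card_range]

lemma chainOf_mem_fullChains {n : ℕ} (f : Numbering (Fin n)) : chainOf f ∈ fullChains n := by
  have hch : ∀ A ∈ chainOf f, ∀ B ∈ chainOf f, A ⊆ B ∨ B ⊆ A := by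
    intro A hA B hB
    rw [mem_chainOf] at hA hB
    rcases le_total A.card B.card with h | h
    · exact Or.inl (hA.subset_of_card_le_card hB h)
    · exact Or.inr (hB.subset_of_card_le_card hA h)
  simp only [fullChains, Finset.mem_filter, Finset.mem_univ, true_and]
  refine ⟨?_, hch⟩
  rw [← Finset.card_image_of_injOn (card_injOn_of_chain hch), ← Finset.card_range (n + 1)]
  congr 1
  ext k
  simp only [Finset.mem_image, Finset.mem_range]
  constructor
  · rintro ⟨A, _, rfl⟩
    have := Finset.card_le_univ A
    simp only [Fintype.card_fin] at this
    omega
  · intro hk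
    exact ⟨_, initial_mem_chainOf f (by omega : k ≤ n), card_initial f (by omega)⟩

lemma chainOf_injective (n : ℕ) : Function.Injective (chainOf (n := n)) := by
  -- the prefix ending at `x` in one numbering is a prefix of the other
  have key : ∀ f g : Numbering (Fin n), chainOf f = chainOf g → ∀ x, (g x : ℕ) ≤ f x := by
    intro f g h x
    have hk : (f x : ℕ) + 1 ≤ n := by
      have := (f x).2
      simp only [Fintype.card_fin] at this
      omega
    have hmem := initial_mem_chainOf f hk
    rw [h, mem_chainOf] at hmem
    have := (hmem x).1 (by simp)
    rw [card_initial f hk] at this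
    omega
  intro f g h
  ext x
  exact le_antisymm (key g f h.symm x) (key f g h x)

/-- Every full chain comes from a numbering: `x` is numbered by the size of the largest member of
the chain that avoids `x`, which is one less than the number of members avoiding `x`. -/
lemma exists_chainOf_eq {n : ℕ} {σ : Finset (Finset (Fin n))} (hσ : σ ∈ fullChains n) :
    ∃ f : Numbering (Fin n), chainOf f = σ := by
  have him := image_card_eq hσ
  have hσ' := hσ
  simp only [fullChains, Finset.mem_filter, Finset.mem_univ, true_and] at hσ
  obtain ⟨-, hch⟩ := hσ
  have hinj := card_injOn_of_chain hch
  have hex : ∀ k, k ≤ n → ∃ A ∈ σ, A.card = k := by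
    intro k hk
    have : k ∈ σ.image Finset.card := by rw [him]; simpa [Nat.lt_succ_iff] using hk
    simpa using this
  -- for a finite chain, inclusion of members is comparison of sizes
  have hsub : ∀ A ∈ σ, ∀ B ∈ σ, A.card ≤ B.card → A ⊆ B := by
    intro A hA B hB h
    rcases hch A hA B hB with h' | h'
    · exact h'
    · exact (Finset.eq_of_subset_of_card_le h' h).ge
  let N : Fin n → Finset (Finset (Fin n)) := fun x => σ.filter fun A => x ∉ A
  have hin : ∀ A ∈ σ, ∀ x ∈ A, (N x).card ≤ A.card := by
    intro A hA x hx
    rw [← Finset.card_range A.card]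
    refine Finset.card_le_card_of_injOn Finset.card ?_
      (hinj.mono (fun B hB => (Finset.mem_filter.1 hB).1))
    intro B hB
    obtain ⟨hB, hxB⟩ := Finset.mem_filter.1 hB
    simp only [Finset.coe_range, Set.mem_Iio]
    by_contra hle
    exact hxB (hsub A hA B hB (not_lt.1 hle) hx)
  have hout : ∀ A ∈ σ, ∀ x ∉ A, A.card + 1 ≤ (N x).card := by
    intro A hA x hx
    have hAn := Finset.card_le_univ A
    simp only [Fintype.card_fin] at hAn
    rw [← Finset.card_range (A.card + 1)]
    refine le_trans (Finset.card_le_card ?_) (Finset.card_image_le (f := Finset.card))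
    intro k hk
    have hk' := Finset.mem_range.1 hk
    obtain ⟨B, hB, rfl⟩ := hex k (by omega)
    exact Finset.mem_image_of_mem _
      (Finset.mem_filter.2 ⟨hB, fun hxB => hx (hsub B hB A hA (by omega) hxB)⟩)
  have hpos : ∀ x, 1 ≤ (N x).card := by
    intro x
    obtain ⟨A, hA, hA0⟩ := hex 0 (Nat.zero_le _)
    rw [Finset.card_eq_zero] at hA0
    have := hout A hA x (by simp [hA0])
    omega
  have hle : ∀ x, (N x).card ≤ n := by
    intro x
    obtain ⟨A, hA, hAn⟩ := hex n le_rfl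
    have hAu : A = Finset.univ := by
      rw [← Finset.card_eq_iff_eq_univ]; simpa using hAn
    have := hin A hA x (by simp [hAu])
    omega
  let g : Fin n → Fin (Fintype.card (Fin n)) := fun x =>
    ⟨(N x).card - 1, by have := hpos x; have := hle x; simp only [Fintype.card_fin]; omega⟩
  have hg : ∀ A ∈ σ, ∀ x, x ∈ A ↔ (g x : ℕ) < A.card := by
    intro A hA x
    have := hpos x
    constructor
    · intro hx
      have := hin A hA x hx
      change (N x).card - 1 < A.card
      omega
    · intro h
      by_contra hx
      have := hout A hA x hx
      change (N x).card - 1 < A.card at h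
      omega
  have hginj : Function.Injective g := by
    intro x y hxy
    have hn := (g x).2
    simp only [Fintype.card_fin] at hn
    -- consecutive members of the chain differ by one element
    obtain ⟨A, hA, hAc⟩ := hex (g x) hn.le
    obtain ⟨B, hB, hBc⟩ := hex (g x + 1) hn
    have hcard : (B \ A).card ≤ 1 := by
      rw [Finset.card_sdiff_of_subset (hsub A hA B hB (by omega))]
      omega
    refine Finset.card_le_one.1 hcard x ?_ y ?_
    · rw [Finset.mem_sdiff, hg A hA, hg B hB]; omega
    · rw [Finset.mem_sdiff, hg A hA, hg B hB, ← hxy]; omega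
  have hbij : Function.Bijective g :=
    (Fintype.bijective_iff_injective_and_card g).2 ⟨hginj, by simp⟩
  refine ⟨Equiv.ofBijective g hbij, ?_⟩
  have h2 := chainOf_mem_fullChains (Equiv.ofBijective g hbij)
  simp only [fullChains, Finset.mem_filter, Finset.mem_univ, true_and] at h2 hσ'
  refine (Finset.eq_of_subset_of_card_le ?_ (by rw [h2.1, hσ'.1])).symm
  intro A hA
  rw [mem_chainOf]
  intro x
  exact hg A hA x

lemma fullChains_eq_image (n : ℕ) :
    fullChains n = Finset.univ.image (chainOf (n := n)) := by
  ext σ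
  simp only [Finset.mem_image, Finset.mem_univ, true_and]
  exact ⟨exists_chainOf_eq, by rintro ⟨f, rfl⟩; exact chainOf_mem_fullChains f⟩

/-! ### Counting full chains -/

lemma card_fullChains (n : ℕ) : (fullChains n).card = n.factorial := by
  rw [fullChains_eq_image, Finset.card_image_of_injective _ (chainOf_injective n),
    Finset.card_univ, Fintype.card_numbering, Fintype.card_fin]

lemma card_fullChains_through (n : ℕ) (A : Finset (Fin n)) :
    ((fullChains n).filter fun σ => A ∈ σ).card = A.card.factorial * (n - A.card).factorial := by
  have h : (fullChains n).filter (fun σ => A ∈ σ) = (Numbering.prefixed A).image chainOf := by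
    ext σ
    simp only [fullChains_eq_image, Finset.mem_filter, Finset.mem_image, Finset.mem_univ,
      true_and, Numbering.mem_prefixed]
    constructor
    · rintro ⟨⟨f, rfl⟩, hA⟩
      exact ⟨f, mem_chainOf.1 hA, rfl⟩
    · rintro ⟨f, hf, rfl⟩
      exact ⟨⟨f, rfl⟩, mem_chainOf.2 hf⟩
  rw [h, Finset.card_image_of_injective _ (chainOf_injective n), Numbering.card_prefixed,
    Fintype.card_fin]

lemma middle_factorial_le {n k : ℕ} (hk : k ≤ n) :
    (n / 2).factorial * ((n + 1) / 2).factorial ≤ k.factorial * (n - k).factorial := by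
  have h1 := Nat.choose_mul_factorial_mul_factorial hk
  have h2 := Nat.choose_mul_factorial_mul_factorial (Nat.div_le_self n 2)
  rw [show n - n / 2 = (n + 1) / 2 by omega] at h2
  rw [mul_assoc] at h1 h2
  refine Nat.le_of_mul_le_mul_left ?_ (Nat.choose_pos (Nat.div_le_self n 2))
  rw [h2, ← h1]
  exact Nat.mul_le_mul_right _ (Nat.choose_le_middle k n)

/-! ### Full chains and `Q₂`-free families -/

/-- A chain meets a `Q₂`-free family in at most three sets: among four, the smallest and the
largest together with two others form a forbidden configuration. -/
lemma card_inter_le_three {n : ℕ} {F : Finset (Finset (Fin n))} (hF : Q2Free F)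
    {σ : Finset (Finset (Fin n))} (hσ : σ ∈ fullChains n) : (σ ∩ F).card ≤ 3 := by
  simp only [fullChains, Finset.mem_filter, Finset.mem_univ, true_and] at hσ
  by_contra! hcard
  have hsub : ∀ A ∈ σ ∩ F, ∀ B ∈ σ ∩ F, A.card ≤ B.card → A ⊆ B := by
    intro A hA B hB h
    rcases hσ.2 A (Finset.mem_inter.1 hA).1 B (Finset.mem_inter.1 hB).1 with h' | h'
    · exact h'
    · exact (Finset.eq_of_subset_of_card_le h' h).ge
  have hne : (σ ∩ F).Nonempty := Finset.card_pos.1 (by omega)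
  obtain ⟨A, hA, hmin⟩ := Finset.exists_min_image (σ ∩ F) Finset.card hne
  have hA' : ((σ ∩ F).erase A).card = (σ ∩ F).card - 1 := Finset.card_erase_of_mem hA
  obtain ⟨D, hD, hmax⟩ := Finset.exists_max_image ((σ ∩ F).erase A) Finset.card
    (Finset.card_pos.1 (by omega))
  have hD' : (((σ ∩ F).erase A).erase D).card = ((σ ∩ F).erase A).card - 1 :=
    Finset.card_erase_of_mem hD
  obtain ⟨B, hB, C, hC, hBC⟩ := Finset.one_lt_card.1
    (show 1 < (((σ ∩ F).erase A).erase D).card by omega)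
  obtain ⟨hBD, hB⟩ := Finset.mem_erase.1 hB
  obtain ⟨hCD, hC⟩ := Finset.mem_erase.1 hC
  have hBD' := hmax B hB
  have hCD' := hmax C hC
  obtain ⟨hBA, hB⟩ := Finset.mem_erase.1 hB
  obtain ⟨hCA, hC⟩ := Finset.mem_erase.1 hC
  obtain ⟨hDA, hD⟩ := Finset.mem_erase.1 hD
  exact hF ⟨A, B, C, D, (Finset.mem_inter.1 hA).2, (Finset.mem_inter.1 hB).2,
    (Finset.mem_inter.1 hC).2, (Finset.mem_inter.1 hD).2, hBA.symm, hCA.symm, hDA.symm, hBC,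
    hBD, hCD, hsub A hA B hB (hmin B hB), hsub B hB D hD hBD', hsub A hA C hC (hmin C hC),
    hsub C hC D hD hCD'⟩

lemma sum_card_inter_le {n : ℕ} {F : Finset (Finset (Fin n))} (hF : Q2Free F) :
    (∑ σ ∈ fullChains n, ((σ ∩ F).card : ℤ))
      ≤ 2 * n.factorial + (chainsWith n F 3).card - (chainsWith n F 1).card := by
  have h : ∀ σ ∈ fullChains n, ((σ ∩ F).card : ℤ)
      ≤ 2 + (if (σ ∩ F).card = 3 then 1 else 0) - (if (σ ∩ F).card = 1 then 1 else 0) := by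
    intro σ hσ
    have := card_inter_le_three hF hσ
    split_ifs <;> omega
  refine (Finset.sum_le_sum h).trans (le_of_eq ?_)
  rw [Finset.sum_sub_distrib, Finset.sum_add_distrib, Finset.sum_const, card_fullChains]
  simp only [Finset.sum_boole, chainsWith, nsmul_eq_mul]
  ring

/-- For a `Q₂`-free family `F`: every full chain contains at most `3` members of `F`, and
`⌊n/2⌋! ⌈n/2⌉! |F| ≤ 2 n! + |Υ³| - |Υ¹|`; equivalently
`|F| ≤ (2 + (|Υ³| - |Υ¹|)/n!) C(n, ⌊n/2⌋)`. -/
theorem q2_chain_counting (n : ℕ) (F : Finset (Finset (Fin n))) (hF : Q2Free F) :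
    (∀ σ ∈ fullChains n, (σ ∩ F).card ≤ 3) ∧
    ((n / 2).factorial * ((n + 1) / 2).factorial * F.card : ℤ)
      ≤ 2 * n.factorial + (chainsWith n F 3).card - (chainsWith n F 1).card ∧
    (F.card : ℝ)
      ≤ (2 + (((chainsWith n F 3).card : ℝ) - ((chainsWith n F 1).card : ℝ)) / n.factorial)
        * (n.choose (n / 2)) := by
  have hint : ((n / 2).factorial * ((n + 1) / 2).factorial * F.card : ℤ)
      ≤ 2 * n.factorial + (chainsWith n F 3).card - (chainsWith n F 1).card := by
    refine le_trans ?_ (sum_card_inter_le hF)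
    have h : F.card * ((n / 2).factorial * ((n + 1) / 2).factorial)
        ≤ ∑ σ ∈ fullChains n, (F ∩ σ).card := by
      refine Finset.le_sum_card_inter fun A _ => ?_
      rw [card_fullChains_through]
      exact middle_factorial_le (by simpa using Finset.card_le_univ A)
    simp only [Finset.inter_comm F] at h
    rw [mul_comm]
    exact_mod_cast h
  refine ⟨fun σ hσ => card_inter_le_three hF hσ, hint, ?_⟩
  have hreal : ((n / 2).factorial * ((n + 1) / 2).factorial * F.card : ℝ)
      ≤ 2 * n.factorial + (chainsWith n F 3).card - (chainsWith n F 1).card := by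
    exact_mod_cast hint
  have hch : (n.choose (n / 2) * (n / 2).factorial * ((n + 1) / 2).factorial : ℝ)
      = n.factorial := by
    have h2 := Nat.choose_mul_factorial_mul_factorial (Nat.div_le_self n 2)
    rw [show n - n / 2 = (n + 1) / 2 by omega] at h2
    exact_mod_cast h2
  have hpos : (0 : ℝ) < n.factorial := by exact_mod_cast n.factorial_pos
  refine le_of_mul_le_mul_left ?_ hpos
  calc (n.factorial : ℝ) * F.card
      = n.choose (n / 2) * ((n / 2).factorial * ((n + 1) / 2).factorial * F.card) := by
        rw [← hch]; ring
    _ ≤ n.choose (n / 2)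
        * (2 * n.factorial + (chainsWith n F 3).card - (chainsWith n F 1).card) :=
        mul_le_mul_of_nonneg_left hreal (Nat.cast_nonneg _)
    _ = _ := by field_simp; ring
end

section
/- Let 1 ≤ k ≤ n − 1 and let 𝐅 be any family of subsets of [n] in which every member has size k − 1, k, or k + 1. Let 𝒮 = {A ∈ 𝐅 : |A| = k − 1}, 𝒯 = {A ∈ 𝐅 : |A| = k}, 𝒰 = {A ∈ 𝐅 : |A| = k + 1}. Let Υ be the set of 3-element chains X ⊂ Y ⊂ Z with |X| = k − 1, |Y| = k, |Z| = k + 1, and for i = 0, 1, 2, 3 let Υ_i = {σ ∈ Υ : |σ ∩ 𝐅| = i}. Then |Υ| = C(n,k)·k·(n − k) and (k+1)·k·|𝒰| + k·(n−k)·|𝒯| + (n−k+1)·(n−k)·|𝒮| ≤ 2·C(n,k)·k·(n−k) + |Υ₃| − |Υ₁|. -/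
/-!
Count the incidences between chains of `Υ` and members of `F`. A set of size `m + 1` covers `m + 1`
sets, and a set of size `m` is covered by `n - m` sets, so a set of size `k + 1`, `k`, `k - 1` lies
on `(k + 1) k`, `k (n - k)`, `(n - k + 1)(n - k)` chains respectively. Hence the left-hand side of
the inequality is the sum over `σ ∈ Υ` of `|σ ∩ F|`, and the bound is the sum over `Υ` of the
pointwise inequality `c + [c = 1] ≤ 2 + [c = 3]` for `c ∈ {0, 1, 2, 3}`.
The size of `Υ` comes from counting the chains through each of the `C(n, k)` middle sets.
-/

/-- The set of 3-element chains `X ⊂ Y ⊂ Z` with `|X| = k - 1`, `|Y| = k`, `|Z| = k + 1`,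
encoded as triples. -/
def triChains (n k : ℕ) : Finset (Finset (Fin n) × Finset (Fin n) × Finset (Fin n)) :=
  Finset.univ.filter fun σ =>
    σ.1.card = k - 1 ∧ σ.2.1.card = k ∧ σ.2.2.card = k + 1 ∧ σ.1 ⊆ σ.2.1 ∧ σ.2.1 ⊆ σ.2.2

/-- The number of members of the chain `σ` that belong to `F`. -/
def triCount {n : ℕ} (F : Finset (Finset (Fin n)))
    (σ : Finset (Fin n) × Finset (Fin n) × Finset (Fin n)) : ℕ :=
  (if σ.1 ∈ F then 1 else 0) + (if σ.2.1 ∈ F then 1 else 0) + (if σ.2.2 ∈ F then 1 else 0)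

/-- The set of 3-element chains through layers `k-1, k, k+1` containing exactly `i`
members of `F`. -/
def triChainsWith (n k : ℕ) (F : Finset (Finset (Fin n))) (i : ℕ) :
    Finset (Finset (Fin n) × Finset (Fin n) × Finset (Fin n)) :=
  (triChains n k).filter fun σ => triCount F σ = i

open Finset

/-- The sets of size `m` contained in `A`. -/
def lowerSets {n : ℕ} (m : ℕ) (A : Finset (Fin n)) : Finset (Finset (Fin n)) :=
  univ.filter fun X => X.card = m ∧ X ⊆ A

/-- The sets of size `m` containing `A`. -/
def upperSets {n : ℕ} (m : ℕ) (A : Finset (Fin n)) : Finset (Finset (Fin n)) :=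
  univ.filter fun X => X.card = m ∧ A ⊆ X

lemma card_lowerSets {n m : ℕ} {A : Finset (Fin n)} (hA : A.card = m + 1) :
    (lowerSets m A).card = m + 1 := by
  have : lowerSets m A = A.powersetCard m := by
    ext X; simp [lowerSets, mem_powersetCard, and_comm]
  rw [this, card_powersetCard, hA, Nat.choose_succ_self_right]

/-- Complementation turns the sets covering `A` into the sets covered by `Aᶜ`. -/
lemma card_upperSets {n m : ℕ} (hm : m < n) {A : Finset (Fin n)} (hA : A.card = m) :
    (upperSets (m + 1) A).card = n - m := by
  obtain ⟨d, rfl⟩ := Nat.exists_eq_add_of_lt hm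
  have hc : Aᶜ.card = d + 1 := by rw [card_compl, hA, Fintype.card_fin]; omega
  have : (upperSets (m + 1) A).card = (lowerSets d Aᶜ).card := by
    refine card_nbij' (fun X => Xᶜ) (fun X => Xᶜ) ?_ ?_ ?_ ?_
    · intro X hX
      simp only [upperSets, lowerSets, coe_filter, mem_univ, true_and, Set.mem_ofPred_eq] at hX ⊢
      refine ⟨?_, compl_subset_compl.2 hX.2⟩
      rw [card_compl, hX.1, Fintype.card_fin]; omega
    · intro X hX
      simp only [upperSets, lowerSets, coe_filter, mem_univ, true_and, Set.mem_ofPred_eq] at hX ⊢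
      refine ⟨?_, subset_compl_comm.1 hX.2⟩
      rw [card_compl, hX.1, Fintype.card_fin]; omega
    · intro X _; simp
    · intro X _; simp
  rw [this, card_lowerSets hc]; omega

lemma card_chains_mid {n m : ℕ} (hm : m + 1 < n) {A : Finset (Fin n)} (hA : A.card = m + 1) :
    ((triChains n (m + 1)).filter fun σ => σ.2.1 = A).card = (m + 1) * (n - (m + 1)) := by
  have hp : (lowerSets m A ×ˢ upperSets (m + 2) A).card = (m + 1) * (n - (m + 1)) := by
    rw [card_product, card_lowerSets hA, card_upperSets hm hA]
  rw [← hp]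
  refine card_nbij' (fun σ => (σ.1, σ.2.2)) (fun p => (p.1, A, p.2)) ?_ ?_ ?_ ?_
  · rintro ⟨X, Y, Z⟩ h
    simp [triChains, lowerSets, upperSets] at h ⊢
    grind
  · rintro ⟨X, Z⟩ h
    simp [triChains, lowerSets, upperSets] at h ⊢
    grind
  · rintro ⟨X, Y, Z⟩ h
    simp at h ⊢
    exact h.2.symm
  · rintro ⟨X, Z⟩ h; rfl

lemma card_chains_top {n m : ℕ} {A : Finset (Fin n)} (hA : A.card = m + 2) :
    ((triChains n (m + 1)).filter fun σ => σ.2.2 = A).card = (m + 2) * (m + 1) := by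
  have hs : ((lowerSets (m + 1) A).sigma fun Y => lowerSets m Y).card = (m + 2) * (m + 1) := by
    rw [card_sigma, sum_const_nat (m := m + 1), card_lowerSets hA]
    intro Y hY
    simp only [lowerSets, mem_filter] at hY
    exact card_lowerSets hY.2.1
  rw [← hs]
  refine card_nbij' (fun σ => ⟨σ.2.1, σ.1⟩) (fun p => (p.2, p.1, A)) ?_ ?_ ?_ ?_
  · rintro ⟨X, Y, Z⟩ h
    simp [triChains, lowerSets] at h ⊢
    grind
  · rintro ⟨Y, X⟩ h
    simp [triChains, lowerSets] at h ⊢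
    grind
  · rintro ⟨X, Y, Z⟩ h
    simp at h ⊢
    exact h.2.symm
  · rintro ⟨X, Z⟩ h; rfl

lemma card_chains_bot {n m : ℕ} (hm : m + 1 < n) {A : Finset (Fin n)} (hA : A.card = m) :
    ((triChains n (m + 1)).filter fun σ => σ.1 = A).card = (n - m) * (n - (m + 1)) := by
  have hs : ((upperSets (m + 1) A).sigma fun Y => upperSets (m + 2) Y).card
      = (n - m) * (n - (m + 1)) := by
    rw [card_sigma, sum_const_nat (m := n - (m + 1)), card_upperSets (by omega) hA]
    intro Y hY
    simp only [upperSets, mem_filter] at hY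
    exact card_upperSets hm hY.2.1
  rw [← hs]
  refine card_nbij' (fun σ => ⟨σ.2.1, σ.2.2⟩) (fun p => (A, p.1, p.2)) ?_ ?_ ?_ ?_
  · rintro ⟨X, Y, Z⟩ h
    simp [triChains, upperSets] at h ⊢
    grind
  · rintro ⟨Y, X⟩ h
    simp [triChains, upperSets] at h ⊢
    grind
  · rintro ⟨X, Y, Z⟩ h
    simp at h ⊢
    exact h.2.symm
  · rintro ⟨X, Z⟩ h; rfl

/-- Double counting of chains whose member on one level, selected by `π`, lies in `F`. -/
lemma card_chains_meeting {n k j c : ℕ} (F : Finset (Finset (Fin n)))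
    (π : Finset (Fin n) × Finset (Fin n) × Finset (Fin n) → Finset (Fin n))
    (hπ : ∀ σ ∈ triChains n k, (π σ).card = j)
    (hc : ∀ A : Finset (Fin n), A.card = j → ((triChains n k).filter fun σ => π σ = A).card = c) :
    (∑ σ ∈ triChains n k, if π σ ∈ F then 1 else 0)
      = c * (F.filter fun A => A.card = j).card := by
  rw [← card_filter, card_eq_sum_card_fiberwise (f := π) (t := F.filter fun A => A.card = j),
    sum_const_nat (m := c), mul_comm]
  · intro A hA
    rw [mem_filter] at hA
    rw [← hc A hA.2, filter_filter]
    congr 1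
    ext σ
    simp only [mem_filter]
    grind
  · intro σ hσ
    simp only [coe_filter, Set.mem_ofPred_eq] at hσ ⊢
    exact ⟨hσ.2, hπ σ hσ.1⟩

/-- Chain counting over three consecutive layers: `|Υ| = C(n,k) k (n-k)` and
`(k+1)k|𝒰| + k(n-k)|𝒯| + (n-k+1)(n-k)|𝒮| ≤ 2 C(n,k) k (n-k) + |Υ₃| - |Υ₁|`. -/
theorem three_layer_chain_counting (n k : ℕ) (hk : 1 ≤ k) (hkn : k ≤ n - 1)
    (F : Finset (Finset (Fin n)))
    (hsizes : ∀ A ∈ F, A.card = k - 1 ∨ A.card = k ∨ A.card = k + 1) :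
    (triChains n k).card = n.choose k * k * (n - k) ∧
    ((k + 1) * k * (F.filter fun A => A.card = k + 1).card
      + k * (n - k) * (F.filter fun A => A.card = k).card
      + (n - k + 1) * (n - k) * (F.filter fun A => A.card = k - 1).card : ℤ)
      ≤ 2 * n.choose k * k * (n - k)
        + (triChainsWith n k F 3).card - (triChainsWith n k F 1).card := by
  obtain ⟨m, rfl⟩ : ∃ m, k = m + 1 := ⟨k - 1, by omega⟩
  have hm : m + 1 < n := by omega
  have hΥ : ∀ σ ∈ triChains n (m + 1),
      σ.1.card = m ∧ σ.2.1.card = m + 1 ∧ σ.2.2.card = m + 2 := by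
    intro σ hσ
    simp only [triChains, mem_filter] at hσ
    exact ⟨hσ.2.1, hσ.2.2.1, hσ.2.2.2.1⟩
  have hU := card_chains_meeting F (fun σ => σ.2.2) (fun σ h => (hΥ σ h).2.2)
    fun A hA => card_chains_top hA
  have hT := card_chains_meeting F (fun σ => σ.2.1) (fun σ h => (hΥ σ h).2.1)
    fun A hA => card_chains_mid hm hA
  have hS := card_chains_meeting F (fun σ => σ.1) (fun σ h => (hΥ σ h).1)
    fun A hA => card_chains_bot hm hA
  have hcard : (triChains n (m + 1)).card = n.choose (m + 1) * (m + 1) * (n - (m + 1)) := by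
    -- Taking `F` to be the whole power set counts every chain through its middle set.
    have h := card_chains_meeting univ (fun σ => σ.2.1) (fun σ h => (hΥ σ h).2.1)
      fun A hA => card_chains_mid hm hA
    have hL : (univ.filter fun A : Finset (Fin n) => A.card = m + 1).card
        = n.choose (m + 1) := by simp
    rw [hL] at h
    simp only [mem_univ, if_true, sum_const, smul_eq_mul, mul_one] at h
    rw [h]; ring
  refine ⟨hcard, ?_⟩
  have key : (∑ σ ∈ triChains n (m + 1), triCount F σ) + (triChainsWith n (m + 1) F 1).card
      ≤ 2 * (triChains n (m + 1)).card + (triChainsWith n (m + 1) F 3).card := by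
    rw [triChainsWith, triChainsWith, card_filter, card_filter, ← sum_add_distrib, mul_comm,
      ← smul_eq_mul, ← sum_const, ← sum_add_distrib]
    refine sum_le_sum fun σ _ => ?_
    have : triCount F σ ≤ 3 := by unfold triCount; split_ifs <;> simp
    split_ifs <;> omega
  simp only [triCount, sum_add_distrib] at key
  rw [hU, hT, hS, hcard] at key
  obtain ⟨d, rfl⟩ := Nat.exists_eq_add_of_lt hm
  rw [show m + 1 + d + 1 - (m + 1) = d + 1 by omega,
    show m + 1 + d + 1 - m = d + 2 by omega] at key
  rw [Nat.add_sub_cancel, show m + 1 + 1 = m + 2 from rfl]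
  -- Abstracting the cardinalities keeps casts from being pushed into the filter predicates.
  generalize (F.filter fun A => A.card = m + 2).card = u at *
  generalize (F.filter fun A => A.card = m + 1).card = t at *
  generalize (F.filter fun A => A.card = m).card = s at *
  zify at key
  push_cast
  ring_nf at key ⊢
  linarith
end

section
/- Let 1 ≤ k ≤ n − 1 and let 𝐅 be a family of subsets of [n] with every member of size k − 1, k, or k + 1; set 𝒮, 𝒯, 𝒰 to be the members of 𝐅 of sizes k − 1, k, k + 1 respectively. For X ∈ 𝒮 let f(X) = |{T ∈ 𝒯 : X ⊂ T}| and for Z ∈ 𝒰 let g(Z) = |{T ∈ 𝒯 : T ⊂ Z}|. Let Υ_i be the set of 3-element chains X ⊂ Y ⊂ Z with |X| = k − 1, |Y| = k, |Z| = k + 1 containing exactly i members of 𝐅. Then |Υ₃| − |Υ₁| ≤ (n − k)·Σ_{X∈𝒮} f(X) + k·Σ_{Z∈𝒰} g(Z) − |𝒯|·k·(n − k). -/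
/-- The subsets of `Y` of size `k - 1`; when `|Y| = k`, the bottoms of chains with middle `Y`. -/
def lowerNbrs {n : ℕ} (k : ℕ) (Y : Finset (Fin n)) : Finset (Finset (Fin n)) :=
  Finset.univ.filter fun X => X.card = k - 1 ∧ X ⊆ Y

/-- The supersets of `Y` of size `k + 1`; when `|Y| = k`, the tops of chains with middle `Y`. -/
def upperNbrs {n : ℕ} (k : ℕ) (Y : Finset (Fin n)) : Finset (Finset (Fin n)) :=
  Finset.univ.filter fun Z => Z.card = k + 1 ∧ Y ⊆ Z

lemma card_lowerNbrs {n k : ℕ} (hk : 1 ≤ k) {Y : Finset (Fin n)} (hY : Y.card = k) :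
    (lowerNbrs k Y).card = k := by
  have h : lowerNbrs k Y = Y.powersetCard (k - 1) := by
    ext X
    simp [lowerNbrs, Finset.mem_powersetCard, and_comm]
  rw [h, Finset.card_powersetCard, hY]
  obtain ⟨m, rfl⟩ : ∃ m, k = m + 1 := ⟨k - 1, by omega⟩
  simp

lemma card_upperNbrs {n k : ℕ} {Y : Finset (Fin n)} (hY : Y.card = k) :
    (upperNbrs k Y).card = n - k := by
  have h : upperNbrs k Y = Yᶜ.image fun x => insert x Y := by
    ext Z
    simp only [upperNbrs, Finset.mem_filter, Finset.mem_univ, true_and, Finset.mem_image,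
      Finset.mem_compl]
    constructor
    · rintro ⟨hc, hs⟩
      have h1 : (Z \ Y).card = 1 := by
        rw [Finset.card_sdiff_of_subset hs]
        omega
      obtain ⟨x, hx⟩ := Finset.card_eq_one.mp h1
      have hm : x ∈ Z \ Y := by simp [hx]
      refine ⟨x, (Finset.mem_sdiff.mp hm).2, ?_⟩
      rw [← Finset.sdiff_union_of_subset hs, hx]
      simp
    · rintro ⟨x, hx, rfl⟩
      exact ⟨by rw [Finset.card_insert_of_notMem hx, hY], Finset.subset_insert _ _⟩
  rw [h, Finset.card_image_of_injOn, Finset.card_compl, hY, Fintype.card_fin]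
  intro x hx y _ hxy
  have hx' : x ∉ Y := by simpa using hx
  have hm : x ∈ insert y Y := by
    have : insert x Y = insert y Y := hxy
    rw [← this]
    exact Finset.mem_insert_self _ _
  exact (Finset.mem_insert.mp hm).resolve_right hx'

/-- The case check on the three membership indicators, summed over all chains. -/
lemma card_sub_card_le_sum_chains (n k : ℕ) (F : Finset (Finset (Fin n))) :
    ((triChainsWith n k F 3).card : ℤ) - (triChainsWith n k F 1).card
      ≤ ∑ σ ∈ (triChains n k).filter (fun σ => σ.2.1 ∈ F),
          ((if σ.1 ∈ F then 1 else 0) + (if σ.2.2 ∈ F then 1 else 0) - 1 : ℤ) := by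
  unfold triChainsWith
  rw [Finset.card_filter, Finset.card_filter, Finset.sum_filter]
  push_cast
  rw [← Finset.sum_sub_distrib]
  refine Finset.sum_le_sum fun σ _ => ?_
  unfold triCount
  split_ifs <;> simp_all

/-- A chain is its middle set together with an independent choice of bottom and top. -/
lemma sum_chains_eq (n k : ℕ) (F : Finset (Finset (Fin n)))
    (φ : Finset (Fin n) × Finset (Fin n) × Finset (Fin n) → ℤ) :
    ∑ σ ∈ (triChains n k).filter (fun σ => σ.2.1 ∈ F), φ σ
      = ∑ Y ∈ F.filter (fun A => A.card = k),
          ∑ X ∈ lowerNbrs k Y, ∑ Z ∈ upperNbrs k Y, φ (X, Y, Z) := by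
  simp_rw [← Finset.sum_product']
  rw [Finset.sum_sigma']
  refine Finset.sum_nbij' (fun σ => ⟨σ.2.1, σ.1, σ.2.2⟩) (fun τ => (τ.2.1, τ.1, τ.2.2))
    ?_ ?_ ?_ ?_ ?_
  · intro σ hσ
    simp only [triChains, Finset.mem_filter, Finset.mem_univ, true_and] at hσ
    simp [lowerNbrs, upperNbrs, hσ]
  · intro τ hτ
    simp only [lowerNbrs, upperNbrs, Finset.mem_sigma, Finset.mem_product, Finset.mem_filter,
      Finset.mem_univ, true_and] at hτ
    simp [triChains, hτ]
  all_goals intros; rfl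

/-- `|Υ₃| - |Υ₁| ≤ (n-k) Σ_{X ∈ 𝒮} f(X) + k Σ_{Z ∈ 𝒰} g(Z) - |𝒯| k (n-k)`, where
`f(X)` counts members of `𝒯` above `X` and `g(Z)` counts members of `𝒯` below `Z`. -/
theorem three_layer_ups_diff_bound (n k : ℕ) (hk : 1 ≤ k) (hkn : k ≤ n - 1)
    (F : Finset (Finset (Fin n)))
    (hsizes : ∀ A ∈ F, A.card = k - 1 ∨ A.card = k ∨ A.card = k + 1) :
    ((triChainsWith n k F 3).card : ℤ) - (triChainsWith n k F 1).card
      ≤ (n - k : ℤ) * ∑ X ∈ F.filter (fun A => A.card = k - 1),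
          (((F.filter fun A => A.card = k).filter fun T => X ⊆ T).card : ℤ)
        + (k : ℤ) * ∑ Z ∈ F.filter (fun A => A.card = k + 1),
          (((F.filter fun A => A.card = k).filter fun T => T ⊆ Z).card : ℤ)
        - ((F.filter fun A => A.card = k).card : ℤ) * k * (n - k : ℤ) := by
  refine (card_sub_card_le_sum_chains n k F).trans (le_of_eq ?_)
  rw [sum_chains_eq]
  have hcast : ((n - k : ℕ) : ℤ) = (n : ℤ) - k := Nat.cast_sub (by omega)
  have hin : ∀ Y ∈ F.filter (fun A => A.card = k),
      ∑ X ∈ lowerNbrs k Y, ∑ Z ∈ upperNbrs k Y,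
        ((if X ∈ F then 1 else 0) + (if Z ∈ F then 1 else 0) - 1 : ℤ)
      = (n - k : ℤ) * ∑ X ∈ lowerNbrs k Y, (if X ∈ F then 1 else 0)
        + (k : ℤ) * ∑ Z ∈ upperNbrs k Y, (if Z ∈ F then 1 else 0) - (k : ℤ) * (n - k : ℤ) := by
    intro Y hY
    have hc := (Finset.mem_filter.mp hY).2
    simp only [Finset.sum_sub_distrib, Finset.sum_add_distrib, Finset.sum_const,
      card_lowerNbrs hk hc, card_upperNbrs hc, nsmul_eq_mul, hcast, mul_one, ← Finset.mul_sum]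
    ring
  rw [Finset.sum_congr rfl hin, Finset.sum_sub_distrib, Finset.sum_add_distrib,
    ← Finset.mul_sum, ← Finset.mul_sum, Finset.sum_const, nsmul_eq_mul, ← mul_assoc]
  -- Double counting of the pairs `X ⊂ T` and of the pairs `T ⊂ Z` with both sets in `F`.
  have hlow : ∑ Y ∈ F.filter (fun A => A.card = k),
      ∑ X ∈ lowerNbrs k Y, (if X ∈ F then 1 else 0 : ℤ)
      = ∑ X ∈ F.filter (fun A => A.card = k - 1),
          (((F.filter fun A => A.card = k).filter fun T => X ⊆ T).card : ℤ) := by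
    simp_rw [← Finset.sum_filter, Finset.cast_card]
    apply Finset.sum_comm'
    intro Y X
    simp only [lowerNbrs, Finset.mem_filter, Finset.mem_univ, true_and]
    tauto
  have hupp : ∑ Y ∈ F.filter (fun A => A.card = k),
      ∑ Z ∈ upperNbrs k Y, (if Z ∈ F then 1 else 0 : ℤ)
      = ∑ Z ∈ F.filter (fun A => A.card = k + 1),
          (((F.filter fun A => A.card = k).filter fun T => T ⊆ Z).card : ℤ) := by
    simp_rw [← Finset.sum_filter, Finset.cast_card]
    apply Finset.sum_comm'
    intro Y Z
    simp only [upperNbrs, Finset.mem_filter, Finset.mem_univ, true_and]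
    tauto
  rw [hlow, hupp]
end

section
/- There exist an absolute constant c and n₀ such that the following holds for all n ≥ n₀. Let k be an integer with |k − n/2| ≤ n^{2/3}, let N' = C(n,k), and let 𝐅 be a Q₂-free family of subsets of [n] with every member of size k − 1, k, or k + 1; set 𝒮, 𝒯, 𝒰 to be the members of 𝐅 of sizes k − 1, k, k + 1 respectively, and assume |𝒮| ≤ N' and |𝒰| ≤ N'. For X ∈ 𝒮 let f(X) = |{T ∈ 𝒯 : X ⊂ T}| and for Z ∈ 𝒰 let g(Z) = |{T ∈ 𝒯 : T ⊂ Z}|. Then Σ_{X∈𝒮} f(X) ≤ (k+1)·√(|𝒮|·(N' − |𝒰|)) + c·n^{5/6}·N' and Σ_{Z∈𝒰} g(Z) ≤ (n−k+1)·√(|𝒰|·(N' − |𝒮|)) + c·n^{5/6}·N'. -/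
/-- Abstract double count. Here `r X A` relates `X ∈ S` to `A ∈ T`, and `s A w` relates `A ∈ T` to
`w ∈ W`. It is applied with `r`, `s` both inclusion and `j` the union, and to the dual situation
with `j` the intersection. -/
lemma sum_mul_pred_le {α : Type*} [DecidableEq α] (S T W : Finset α) (r s : α → α → Prop)
    [DecidableRel r] [DecidableRel s] (j : α → α → α) (m : ℕ)
    (h1 : ∀ X ∈ S, ∀ A ∈ T, ∀ B ∈ T, A ≠ B → r X A → r X B →
      j A B ∈ W ∧ s A (j A B) ∧ s B (j A B))
    (h2 : ∀ X ∈ S, ∀ Y ∈ S, ∀ A ∈ T, ∀ B ∈ T, A ≠ B → r X A → r X B → r Y A → r Y B → X = Y)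
    (h3 : ∀ w ∈ W, (T.filter fun A => s A w).card ≤ m) :
    ∑ X ∈ S, (T.filter fun A => r X A).card * ((T.filter fun A => r X A).card - 1)
      ≤ W.card * (m * (m - 1)) := by
  have key : (S.sigma fun X => (T.filter fun A => r X A).offDiag).card
      ≤ (W.sigma fun w => (T.filter fun A => s A w).offDiag).card := by
    refine Finset.card_le_card_of_injOn (fun p => ⟨j p.2.1 p.2.2, p.2⟩) ?_ ?_
    · rintro ⟨X, A, B⟩ hp
      simp only [Finset.coe_sigma, Set.mem_sigma_iff, Finset.mem_coe, Finset.mem_offDiag,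
        Finset.mem_filter] at hp ⊢
      obtain ⟨hX, ⟨hA, hXA⟩, ⟨hB, hXB⟩, hne⟩ := hp
      obtain ⟨a, b, c⟩ := h1 X hX A hA B hB hne hXA hXB
      exact ⟨a, ⟨hA, b⟩, ⟨hB, c⟩, hne⟩
    · rintro ⟨X, A, B⟩ hp ⟨Y, A', B'⟩ hq h
      simp only [Finset.coe_sigma, Set.mem_sigma_iff, Finset.mem_coe, Finset.mem_offDiag,
        Finset.mem_filter] at hp hq
      obtain ⟨hX, ⟨hA, hXA⟩, ⟨hB, hXB⟩, hne⟩ := hp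
      obtain ⟨hY, ⟨-, hYA⟩, ⟨-, hYB⟩, -⟩ := hq
      simp only [Sigma.mk.injEq, heq_eq_eq, Prod.mk.injEq] at h
      obtain ⟨-, rfl, rfl⟩ := h
      rw [h2 X hX Y hY A hA B hB hne hXA hXB hYA hYB]
  rw [Finset.card_sigma, Finset.card_sigma] at key
  simp only [Finset.offDiag_card] at key
  calc _ = ∑ X ∈ S, ((T.filter fun A => r X A).card * (T.filter fun A => r X A).card
          - (T.filter fun A => r X A).card) :=
        Finset.sum_congr rfl fun X _ => by rw [Nat.mul_sub, mul_one]
    _ ≤ _ := key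
    _ ≤ ∑ _w ∈ W, m * (m - 1) := Finset.sum_le_sum fun w hw => by
        have := h3 w hw
        calc _ = (T.filter fun A => s A w).card * ((T.filter fun A => s A w).card - 1) := by
              rw [Nat.mul_sub, mul_one]
          _ ≤ _ := Nat.mul_le_mul this (Nat.sub_le_sub_right this 1)
    _ = _ := by simp

/-- The Cauchy–Schwarz step: a bound on `Σ f (f - 1)` gives one on `Σ f`. -/
lemma sum_le_of_sum_mul_pred {α : Type*} (S : Finset α) (f : α → ℕ) (w m : ℕ) (N u t : ℝ)
    (ht : 1 ≤ t) (hm : (m : ℝ) ≤ 2 * t ^ 6) (hS : (S.card : ℝ) ≤ N) (hu : u ≤ N)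
    (hw : (w : ℝ) ≤ N - u + N * (9 / t ^ 2))
    (h : ∑ X ∈ S, f X * (f X - 1) ≤ w * (m * (m - 1))) :
    (∑ X ∈ S, (f X : ℝ)) ≤ m * Real.sqrt (S.card * (N - u)) + 7 * t ^ 5 * N := by
  have ht0 : 0 < t := by linarith
  have hS0 : (0 : ℝ) ≤ S.card := Nat.cast_nonneg _
  have hN : 0 ≤ N := hS0.trans hS
  set x : ℝ := ∑ X ∈ S, (f X : ℝ) with hx
  set σ : ℝ := (S.card : ℝ) with hσ
  have hcs : x ^ 2 ≤ σ * ∑ X ∈ S, (f X : ℝ) ^ 2 := sq_sum_le_card_mul_sum_sq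
  have hsq : ∑ X ∈ S, (f X : ℝ) ^ 2 ≤ m ^ 2 * w + x := by
    have h' : ∑ X ∈ S, f X * f X ≤ m * m * w + ∑ X ∈ S, f X := by
      calc ∑ X ∈ S, f X * f X = ∑ X ∈ S, f X * (f X - 1) + ∑ X ∈ S, f X := by
            rw [← Finset.sum_add_distrib]
            refine Finset.sum_congr rfl fun X _ => ?_
            cases f X <;> simp; ring
        _ ≤ w * (m * (m - 1)) + ∑ X ∈ S, f X := by gcongr
        _ ≤ w * (m * m) + ∑ X ∈ S, f X := by gcongr; exact Nat.sub_le m 1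
        _ = _ := by ring
    have h'' : (∑ X ∈ S, (f X : ℝ) * f X) ≤ m * m * w + ∑ X ∈ S, (f X : ℝ) := by
      exact_mod_cast h'
    simpa only [sq] using h''
  have hq : x ^ 2 ≤ σ * (m ^ 2 * w + x) := hcs.trans (by gcongr)
  set a : ℝ := m * Real.sqrt (σ * (N - u)) with ha
  have ha0 : 0 ≤ a := by positivity
  have ha2 : a ^ 2 = m ^ 2 * (σ * (N - u)) := by
    rw [ha, mul_pow, Real.sq_sqrt (mul_nonneg hS0 (by linarith))]
  set b : ℝ := 3 * m * N / t with hb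
  have hb0 : 0 ≤ b := by positivity
  have hb2 : b ^ 2 = m ^ 2 * (N * (N * (9 / t ^ 2))) := by rw [hb]; field_simp; ring
  have hA : σ * (m ^ 2 * w) ≤ a ^ 2 + b ^ 2 := by
    calc σ * (m ^ 2 * w) ≤ σ * (m ^ 2 * (N - u + N * (9 / t ^ 2))) := by gcongr
      _ = m ^ 2 * (σ * (N - u)) + m ^ 2 * (σ * (N * (9 / t ^ 2))) := by ring
      _ ≤ m ^ 2 * (σ * (N - u)) + m ^ 2 * (N * (N * (9 / t ^ 2))) := by gcongr
      _ = _ := by rw [ha2, hb2]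
  -- If `x > σ` then `(x - σ)² ≤ x² - σ x ≤ a² + b² ≤ (a + b)²`.
  have hxab : x ≤ σ + (a + b) := by
    by_contra! hcon
    nlinarith [mul_nonneg ha0 hb0, mul_nonneg hS0 (by linarith : (0 : ℝ) ≤ x - σ)]
  have hbt : b ≤ 6 * t ^ 5 * N := by
    rw [hb, div_le_iff₀ ht0]
    nlinarith [mul_le_mul_of_nonneg_right hm hN]
  have ht5 : 1 ≤ t ^ 5 := one_le_pow₀ ht
  nlinarith [mul_le_mul_of_nonneg_right ht5 hN]

/-- An adjacent layer is at most `1 + 9 n^{-1/3}` times as large, with `n = t ^ 6`. Here `N`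
is the size of layer `k`, `M` that of the adjacent layer, and `M / N = a / b`. -/
lemma layer_le {N M a b t : ℝ} (ht : 2 ≤ t) (hN : 0 ≤ N) (hMN : M * b = N * a)
    (hab : a ≤ b + 2 * t ^ 4) (hb : t ^ 6 / 2 - t ^ 4 ≤ b) : M ≤ N + N * (9 / t ^ 2) := by
  have ht0 : 0 < t := by linarith
  have h4 : 0 < t ^ 4 := by positivity
  have ht2 : 4 ≤ t ^ 2 := by nlinarith
  have hb4 : t ^ 6 / 4 ≤ b := by nlinarith [mul_le_mul_of_nonneg_left ht2 h4.le]
  have hb0 : 0 < b := lt_of_lt_of_le (by positivity) hb4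
  have h : a ≤ (1 + 9 / t ^ 2) * b := by
    have : 9 / t ^ 2 * (t ^ 6 / 4) ≤ 9 / t ^ 2 * b := by gcongr
    have e : 9 / t ^ 2 * (t ^ 6 / 4) = 9 / 4 * t ^ 4 := by field_simp
    nlinarith
  refine le_of_mul_le_mul_right ?_ hb0
  rw [hMN]
  calc N * a ≤ N * ((1 + 9 / t ^ 2) * b) := by gcongr
    _ = _ := by ring

section Layers

variable {α : Type*} [DecidableEq α]

lemma inter_eq_of_card {k : ℕ} {X A B : Finset α} (hX : X.card + 1 = k) (hA : A.card = k)
    (hB : B.card = k) (hne : A ≠ B) (hXA : X ⊆ A) (hXB : X ⊆ B) : A ∩ B = X := by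
  refine (Finset.eq_of_subset_of_card_le (Finset.subset_inter hXA hXB) ?_).symm
  by_contra! h
  have e1 : A ∩ B = A := Finset.eq_of_subset_of_card_le Finset.inter_subset_left (by omega)
  have e2 : A ∩ B = B := Finset.eq_of_subset_of_card_le Finset.inter_subset_right (by omega)
  exact hne (e1.symm.trans e2)

lemma union_eq_of_card {k : ℕ} {Z A B : Finset α} (hZ : Z.card = k + 1) (hA : A.card = k)
    (hB : B.card = k) (hne : A ≠ B) (hAZ : A ⊆ Z) (hBZ : B ⊆ Z) : A ∪ B = Z := by
  refine Finset.eq_of_subset_of_card_le (Finset.union_subset hAZ hBZ) ?_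
  by_contra! h
  have e1 : A = A ∪ B := Finset.eq_of_subset_of_card_le Finset.subset_union_left (by omega)
  have e2 : B = A ∪ B := Finset.eq_of_subset_of_card_le Finset.subset_union_right (by omega)
  exact hne (e1.trans e2.symm)

lemma card_filter_subset_le {k : ℕ} (T : Finset (Finset α)) (hT : ∀ A ∈ T, A.card = k)
    {Z : Finset α} (hZ : Z.card = k + 1) : (T.filter fun A => A ⊆ Z).card ≤ k + 1 := by
  rw [← hZ]
  calc _ ≤ (Z.image fun a => Z.erase a).card := Finset.card_le_card fun A hA => by
        obtain ⟨hAT, hAZ⟩ := Finset.mem_filter.1 hA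
        have hc : (Z \ A).card = 1 := by
          rw [Finset.card_sdiff_of_subset hAZ, hZ, hT A hAT]; omega
        obtain ⟨a, ha⟩ := Finset.card_eq_one.1 hc
        have haZ : a ∈ Z \ A := by simp [ha]
        refine Finset.mem_image.2 ⟨a, (Finset.mem_sdiff.1 haZ).1, ?_⟩
        rw [← Finset.sdiff_singleton_eq_erase, ← ha, Finset.sdiff_sdiff_eq_self hAZ]
    _ ≤ _ := Finset.card_image_le

lemma card_filter_superset_le [Fintype α] {k : ℕ} (T : Finset (Finset α))
    (hT : ∀ A ∈ T, A.card = k) {X : Finset α} (hX : X.card + 1 = k) :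
    (T.filter fun A => X ⊆ A).card ≤ Fintype.card α - X.card := by
  rw [← Finset.card_compl]
  calc _ ≤ (Xᶜ.image fun a => insert a X).card := Finset.card_le_card fun A hA => by
        obtain ⟨hAT, hXA⟩ := Finset.mem_filter.1 hA
        have hc : (A \ X).card = 1 := by
          rw [Finset.card_sdiff_of_subset hXA, hT A hAT]; omega
        obtain ⟨a, ha⟩ := Finset.card_eq_one.1 hc
        have haA : a ∈ A \ X := by simp [ha]
        refine Finset.mem_image.2 ⟨a, by simpa using (Finset.mem_sdiff.1 haA).2, ?_⟩
        rw [Finset.insert_eq, ← ha, Finset.sdiff_union_of_subset hXA]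
    _ ≤ _ := Finset.card_image_le

end Layers

/-- In a `Q₂`-free family there is no full diamond with bottom in layer `k - 1`, sides in layer
`k` and top in layer `k + 1`. -/
lemma Q2Free.no_diamond {α : Type*} {F : Finset (Finset α)} (hF : Q2Free F) {k : ℕ} {X A B Z : Finset α}
    (hX : X ∈ F) (hA : A ∈ F) (hB : B ∈ F) (hZ : Z ∈ F) (cX : X.card + 1 = k)
    (cA : A.card = k) (cB : B.card = k) (cZ : Z.card = k + 1) (hne : A ≠ B)
    (hXA : X ⊆ A) (hXB : X ⊆ B) (hAZ : A ⊆ Z) (hBZ : B ⊆ Z) : False := by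
  refine hF ⟨X, A, B, Z, hX, hA, hB, hZ, ?_, ?_, ?_, hne, ?_, ?_, hXA, hAZ, hXB, hBZ⟩ <;>
  · rintro rfl
    omega

lemma card_layer_sdiff {n i : ℕ} (F : Finset (Finset (Fin n))) :
    (((Finset.univ.powersetCard i) \ F.filter fun A => A.card = i).card : ℝ)
      = n.choose i - ((F.filter fun A => A.card = i).card : ℝ) := by
  rw [Finset.cast_card_sdiff, Finset.card_powersetCard, Finset.card_univ, Fintype.card_fin]
  intro A hA
  simpa using (Finset.mem_filter.1 hA).2

/-- Bounds on `Σ_{X ∈ 𝒮} f(X)` and `Σ_{Z ∈ 𝒰} g(Z)` for a `Q₂`-free family occupying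
three consecutive layers near the middle. -/
theorem sum_f_g_bound :
    ∃ c : ℝ, 0 < c ∧ ∃ n₀ : ℕ, ∀ n : ℕ, n₀ ≤ n →
      ∀ k : ℕ, |(k : ℝ) - (n : ℝ) / 2| ≤ (n : ℝ) ^ ((2 : ℝ) / 3) →
        ∀ F : Finset (Finset (Fin n)), Q2Free F →
          (∀ A ∈ F, A.card = k - 1 ∨ A.card = k ∨ A.card = k + 1) →
          (F.filter fun A => A.card = k - 1).card ≤ n.choose k →
          (F.filter fun A => A.card = k + 1).card ≤ n.choose k →
          ((∑ X ∈ F.filter (fun A => A.card = k - 1),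
              (((F.filter fun A => A.card = k).filter fun T => X ⊆ T).card : ℝ))
            ≤ (k + 1) * Real.sqrt ((F.filter fun A => A.card = k - 1).card *
                ((n.choose k : ℝ) - (F.filter fun A => A.card = k + 1).card))
              + c * (n : ℝ) ^ ((5 : ℝ) / 6) * n.choose k) ∧
          ((∑ Z ∈ F.filter (fun A => A.card = k + 1),
              (((F.filter fun A => A.card = k).filter fun T => T ⊆ Z).card : ℝ))
            ≤ ((n : ℝ) - k + 1) * Real.sqrt ((F.filter fun A => A.card = k + 1).card *
                ((n.choose k : ℝ) - (F.filter fun A => A.card = k - 1).card))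
              + c * (n : ℝ) ^ ((5 : ℝ) / 6) * n.choose k) := by
  refine ⟨7, by norm_num, 64, fun n hn k hk F hF _ hSN hUN => ?_⟩
  obtain ⟨t, ht, htn⟩ : ∃ t : ℝ, 2 ≤ t ∧ t = (n : ℝ) ^ ((1 : ℝ) / 6) := by
    refine ⟨_, ?_, rfl⟩
    have h64 : ((64 : ℝ)) ^ ((1 : ℝ) / 6) = 2 := by
      rw [show (64 : ℝ) = 2 ^ (6 : ℝ) by norm_num, ← Real.rpow_mul (by norm_num)]
      norm_num
    rw [← h64]
    exact Real.rpow_le_rpow (by norm_num) (by exact_mod_cast hn) (by norm_num)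
  have hpow : ∀ i : ℕ, t ^ i = (n : ℝ) ^ ((i : ℝ) / 6) := fun i => by
    rw [htn, ← Real.rpow_natCast, ← Real.rpow_mul (Nat.cast_nonneg n)]
    congr 1
    ring
  have e6 : t ^ 6 = n := by rw [hpow]; norm_num
  have e5 : (n : ℝ) ^ ((5 : ℝ) / 6) = t ^ 5 := by rw [hpow]; norm_num
  have e4 : (n : ℝ) ^ ((2 : ℝ) / 3) = t ^ 4 := by rw [hpow]; norm_num
  rw [e5]
  rw [e4, abs_le, ← e6] at hk
  obtain ⟨hk1, hk2⟩ := hk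
  have h4 : 16 ≤ t ^ 4 := by
    calc (16 : ℝ) = 2 ^ 4 := by norm_num
      _ ≤ t ^ 4 := by gcongr
  have ht2 : 4 ≤ t ^ 2 := by nlinarith
  have h64 : t ^ 4 * 4 ≤ t ^ 6 := by
    nlinarith [mul_le_mul_of_nonneg_left ht2 (by linarith : 0 ≤ t ^ 4)]
  have hk0 : 1 ≤ k := by
    have : (0 : ℝ) < k := by linarith
    exact_mod_cast this
  have hkn : k ≤ n := by
    have : (k : ℝ) ≤ n := by rw [← e6]; linarith
    exact_mod_cast this
  have hknR : (k : ℝ) ≤ n := by exact_mod_cast hkn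
  set S := F.filter fun A => A.card = k - 1 with hS
  set T := F.filter fun A => A.card = k with hT
  set U := F.filter fun A => A.card = k + 1 with hU
  have mS : ∀ X ∈ S, X ∈ F ∧ X.card + 1 = k := fun X hX => by
    obtain ⟨h1, h2⟩ := Finset.mem_filter.1 hX
    exact ⟨h1, by omega⟩
  have mT : ∀ A ∈ T, A ∈ F ∧ A.card = k := fun A hA => Finset.mem_filter.1 hA
  have mU : ∀ Z ∈ U, Z ∈ F ∧ Z.card = k + 1 := fun Z hZ => Finset.mem_filter.1 hZ
  have hSR : (S.card : ℝ) ≤ n.choose k := by exact_mod_cast hSN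
  have hUR : (U.card : ℝ) ≤ n.choose k := by exact_mod_cast hUN
  have hN0 : (0 : ℝ) ≤ n.choose k := Nat.cast_nonneg _
  constructor
  · have hcount := sum_mul_pred_le S T (Finset.univ.powersetCard (k + 1) \ U)
      (fun X A => X ⊆ A) (fun A Z => A ⊆ Z) (fun A B => A ∪ B) (k + 1)
      (fun X hX A hA B hB hne hXA hXB => by
        have hc : (A ∪ B).card = k + 1 := by
          have h1 := Finset.card_union_add_card_inter A B
          rw [inter_eq_of_card (mS X hX).2 (mT A hA).2 (mT B hB).2 hne hXA hXB,
            (mT A hA).2, (mT B hB).2] at h1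
          have := (mS X hX).2
          omega
        refine ⟨Finset.mem_sdiff.2 ⟨by simpa using hc, fun hZ => ?_⟩,
          Finset.subset_union_left, Finset.subset_union_right⟩
        exact hF.no_diamond (mS X hX).1 (mT A hA).1 (mT B hB).1 (mU _ hZ).1 (mS X hX).2
          (mT A hA).2 (mT B hB).2 hc hne hXA hXB Finset.subset_union_left
          Finset.subset_union_right)
      (fun X hX Y hY A hA B hB hne hXA hXB hYA hYB =>
        (inter_eq_of_card (mS X hX).2 (mT A hA).2 (mT B hB).2 hne hXA hXB).symm.trans
          (inter_eq_of_card (mS Y hY).2 (mT A hA).2 (mT B hB).2 hne hYA hYB))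
      (fun Z hZ => card_filter_subset_le T (fun A hA => (mT A hA).2)
        (by simpa using (Finset.mem_sdiff.1 hZ).1))
    have hlayer : (n.choose (k + 1) : ℝ) ≤ n.choose k + n.choose k * (9 / t ^ 2) := by
      refine layer_le (a := (n : ℝ) - k) (b := (k : ℝ) + 1) ht hN0 ?_ ?_ ?_
      · have := Nat.choose_succ_right_eq n k
        rw [← Nat.cast_sub hkn]
        exact_mod_cast this
      · rw [← e6]; linarith
      · linarith
    have := sum_le_of_sum_mul_pred S _ _ _ (n.choose k) U.card t (by linarith)
      (by push_cast; rw [e6.symm] at hknR; linarith) hSR hUR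
      (by rw [card_layer_sdiff F]; linarith) hcount
    push_cast at this
    exact this
  · have hcount := sum_mul_pred_le U T (Finset.univ.powersetCard (k - 1) \ S)
      (fun Z A => A ⊆ Z) (fun A X => X ⊆ A) (fun A B => A ∩ B) (n - k + 1)
      (fun Z hZ A hA B hB hne hAZ hBZ => by
        have hc : (A ∩ B).card + 1 = k := by
          have h1 := Finset.card_union_add_card_inter A B
          rw [union_eq_of_card (mU Z hZ).2 (mT A hA).2 (mT B hB).2 hne hAZ hBZ,
            (mT A hA).2, (mT B hB).2, (mU Z hZ).2] at h1
          omega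
        refine ⟨Finset.mem_sdiff.2 ⟨by simp; omega, fun hX => ?_⟩,
          Finset.inter_subset_left, Finset.inter_subset_right⟩
        exact hF.no_diamond (mS _ hX).1 (mT A hA).1 (mT B hB).1 (mU Z hZ).1 hc
          (mT A hA).2 (mT B hB).2 (mU Z hZ).2 hne Finset.inter_subset_left
          Finset.inter_subset_right hAZ hBZ)
      (fun Z hZ Y hY A hA B hB hne hAZ hBZ hAY hBY =>
        (union_eq_of_card (mU Z hZ).2 (mT A hA).2 (mT B hB).2 hne hAZ hBZ).symm.trans
          (union_eq_of_card (mU Y hY).2 (mT A hA).2 (mT B hB).2 hne hAY hBY))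
      (fun X hX => by
        have hc : X.card = k - 1 := by simpa using (Finset.mem_sdiff.1 hX).1
        refine (card_filter_superset_le T (fun A hA => (mT A hA).2) (by omega)).trans ?_
        rw [Fintype.card_fin]
        omega)
    have hlayer : (n.choose (k - 1) : ℝ) ≤ n.choose k + n.choose k * (9 / t ^ 2) := by
      refine layer_le (a := (k : ℝ)) (b := (n : ℝ) - k + 1) ht hN0 ?_ ?_ ?_
      · have := Nat.choose_succ_right_eq n (k - 1)
        rw [Nat.sub_add_cancel hk0, show n - (k - 1) = n - k + 1 by omega] at this
        rw [← Nat.cast_sub hkn]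
        exact_mod_cast this.symm
      · rw [← e6]; linarith
      · rw [← e6]; linarith
    have hm : ((n - k + 1 : ℕ) : ℝ) = (n : ℝ) - k + 1 := by
      rw [Nat.cast_add, Nat.cast_sub hkn, Nat.cast_one]
    have := sum_le_of_sum_mul_pred U _ _ _ (n.choose k) S.card t (by linarith)
      (by rw [hm, ← e6]; linarith) hUR hSR
      (by rw [card_layer_sdiff F]; linarith) hcount
    rw [hm] at this
    exact this
end

section
/- Let 1 ≤ k ≤ n − 1 and let 𝐅 be a Q₂-free family of subsets of [n] with every member of size k − 1, k, or k + 1; set 𝒮, 𝒯, 𝒰 to be the members of 𝐅 of sizes k − 1, k, k + 1 respectively. For X ∈ 𝒮 let f(X) = |{T ∈ 𝒯 : X ⊂ T}|. Then for every X ∈ 𝒮, the number of sets U ∈ 𝒰 with U ⊃ X is at most C(n − k + 1, 2) − C(f(X), 2). -/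
/-- For a `Q₂`-free family on layers `k-1, k, k+1`: any `X ∈ 𝒮` has at most
`C(n-k+1, 2) - C(f(X), 2)` members of `𝒰` above it, where `f(X) = |{T ∈ 𝒯 : X ⊂ T}|`. -/
theorem members_above_bound (n k : ℕ) (hk : 1 ≤ k) (hkn : k ≤ n - 1)
    (F : Finset (Finset (Fin n))) (hF : Q2Free F)
    (hsizes : ∀ A ∈ F, A.card = k - 1 ∨ A.card = k ∨ A.card = k + 1) :
    ∀ X ∈ F.filter (fun A => A.card = k - 1),
      (((F.filter fun A => A.card = k + 1).filter fun U => X ⊆ U).card : ℤ)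
        ≤ ((n - k + 1).choose 2 : ℤ)
          - (((F.filter fun A => A.card = k).filter fun T => X ⊆ T).card.choose 2 : ℤ) := by
  intro X hX
  obtain ⟨hXF, hXc⟩ := Finset.mem_filter.1 hX
  set P : Finset (Fin n) := Xᶜ.filter (fun i => insert i X ∈ F) with hP
  have hT : ((F.filter fun A => A.card = k).filter fun T => X ⊆ T).card ≤ P.card := by
    refine (Finset.card_le_card (t := P.image (fun i => insert i X)) ?_).trans
      Finset.card_image_le
    intro T hT
    simp only [Finset.mem_filter] at hT
    obtain ⟨⟨hTF, hTc⟩, hXT⟩ := hT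
    have h1 : (T \ X).card = 1 := by
      rw [Finset.card_sdiff_of_subset hXT]; omega
    obtain ⟨i, hi⟩ := Finset.card_eq_one.1 h1
    have hiX : i ∉ X := (Finset.mem_sdiff.1 (hi ▸ Finset.mem_singleton_self i)).2
    have hTi : insert i X = T := by
      rw [Finset.insert_eq, ← hi, Finset.sdiff_union_of_subset hXT]
    refine Finset.mem_image.2 ⟨i, ?_, hTi⟩
    rw [hP, Finset.mem_filter, hTi]
    exact ⟨Finset.mem_compl.2 hiX, hTF⟩
  have hU : ((F.filter fun A => A.card = k + 1).filter fun U => X ⊆ U).card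
      ≤ (Finset.powersetCard 2 Xᶜ \ Finset.powersetCard 2 P).card := by
    refine Finset.card_le_card_of_injOn (fun U => U \ X) ?_ ?_
    · intro U hU
      simp only [Finset.coe_filter, Finset.mem_filter, Set.mem_ofPred_eq] at hU
      obtain ⟨⟨hUF, hUc⟩, hXU⟩ := hU
      have h2 : (U \ X).card = 2 := by
        rw [Finset.card_sdiff_of_subset hXU]; omega
      rw [Finset.mem_coe, Finset.mem_sdiff, Finset.mem_powersetCard, Finset.mem_powersetCard]
      refine ⟨⟨fun i hi => Finset.mem_compl.2 (Finset.mem_sdiff.1 hi).2, h2⟩, fun h => ?_⟩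
      obtain ⟨a, b, hab, hUX⟩ := Finset.card_eq_two.1 h2
      have ha : a ∈ U \ X := by simp [hUX]
      have hb : b ∈ U \ X := by simp [hUX]
      have haP := (Finset.mem_filter.1 (h.1 ha)).2
      have hbP := (Finset.mem_filter.1 (h.1 hb)).2
      obtain ⟨haU, haX⟩ := Finset.mem_sdiff.1 ha
      obtain ⟨hbU, hbX⟩ := Finset.mem_sdiff.1 hb
      have hne : insert a X ≠ insert b X := fun h' =>
        (Finset.mem_insert.1 (h' ▸ Finset.mem_insert_self a X)).elim hab haX
      refine hF ⟨X, insert a X, insert b X, U, hXF, haP, hbP, hUF, ?_, ?_, ?_, ?_, ?_, ?_,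
        Finset.subset_insert _ _, Finset.insert_subset haU hXU,
        Finset.subset_insert _ _, Finset.insert_subset hbU hXU⟩ <;> grind
    · intro U hU V hV hUV
      simp only [Finset.coe_filter, Finset.mem_filter, Set.mem_ofPred_eq] at hU hV
      rw [← Finset.sdiff_union_of_subset hU.2, ← Finset.sdiff_union_of_subset hV.2]
      exact congrArg (· ∪ X) hUV
  have hPX : Finset.powersetCard 2 P ⊆ Finset.powersetCard 2 Xᶜ :=
    Finset.powersetCard_mono (Finset.filter_subset _ _)
  have hle := Finset.card_le_card hPX
  rw [Finset.card_sdiff_of_subset hPX] at hU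
  -- `|Xᶜ| = n - (k - 1)` equals `n - k + 1` because `1 ≤ k ≤ n`.
  have hXcompl : Xᶜ.card = n - k + 1 := by
    rw [Finset.card_compl, Fintype.card_fin]; omega
  rw [Finset.card_powersetCard, Finset.card_powersetCard, hXcompl] at hU hle
  have hch := Nat.choose_le_choose 2 hT
  omega
end

section
/- There is an absolute constant c such that the following holds. Let m ≥ 4 and 4 ≤ η ≤ m be integers, let G be a graph on η vertices with e edges, and set a = η/m. Let α₁ be the number of 3-element subsets of the vertex set inducing exactly one edge of G, and β₀ the number of 4-element subsets inducing no edge of G. Then α₁ + (3/(m − 3))·β₀ ≤ η³/8 + (e²/η)·(a − 2) + (1/4)·e·η·(4 − 3a) − (1/8)·(1 − a)·η³ + c·m². -/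
/-!
The bound comes from counting triples only. Write `n = η`, let `α₀` be the number of independent
triples, `P = ∑ v, C(d v, 2)` the number of cherries (paths with two edges), and `C = C(n, 3)`.

* Every independent 4-set contains four independent triples and a triple lies in `n - 3` 4-sets,
  so `4 β₀ ≤ (n - 3) α₀` (`four_betaZero_le`). As `n ≤ m`, this gives
  `3 / (m - 3) * β₀ ≤ (3 / 4) a α₀`.
* A triple with `0, 1, 2, 3` edges contains `0, 0, 1, 3` cherries. The total number of edges in
  triples is `e (n - 2)`, the total number of cherries is `P`. Comparing values triple by triple
  (`triple_bounds`) gives `α₁ ≤ e (n - 2) - P` and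
  `α₁ + (3/4) α₀ ≤ (3/4) C + (1/4) e (n - 2) - (1/2) P`.
* By Cauchy–Schwarz, `P ≥ 2 e² / n - e` (`cherries_lower`).

The claimed bound is the convex combination of the two inequalities with weights `1 - a` and `a`;
all lower-order terms have the favourable sign.
-/

open scoped Classical

/-- The number of edges of `G` induced by a set `W` of vertices: the number of
two-element subsets of `W` that are edges of `G`. -/
noncomputable def inducedEdgeCount {V : Type*} (G : SimpleGraph V) (W : Finset V) : ℕ :=
  ((W.powersetCard 2).filter fun p => ∃ x ∈ p, ∃ y ∈ p, G.Adj x y).card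

/-- The number of 3-element subsets of the vertex set inducing exactly one edge. -/
noncomputable def alphaOne {V : Type*} [Fintype V] (G : SimpleGraph V) : ℕ :=
  (((Finset.univ : Finset V).powersetCard 3).filter fun W => inducedEdgeCount G W = 1).card

/-- The number of 4-element subsets of the vertex set inducing no edge. -/
noncomputable def betaZero {V : Type*} [Fintype V] (G : SimpleGraph V) : ℕ :=
  (((Finset.univ : Finset V).powersetCard 4).filter fun W => inducedEdgeCount G W = 0).card

/-! ### Auxiliary notions and double counting -/

/-- `p` contains an edge of `G`; for a two-element set `p` this says that `p` is an edge. -/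
def HasEdge {V : Type*} (G : SimpleGraph V) (p : Finset V) : Prop :=
  ∃ x ∈ p, ∃ y ∈ p, G.Adj x y

/-- The vertex `v` is adjacent to all vertices in `S`. -/
def AdjAll {V : Type*} (G : SimpleGraph V) (v : V) (S : Finset V) : Prop :=
  ∀ w ∈ S, G.Adj v w

/-- The number of independent triples of vertices. -/
noncomputable def alphaZero {V : Type*} [Fintype V] (G : SimpleGraph V) : ℕ :=
  (((Finset.univ : Finset V).powersetCard 3).filter fun W => inducedEdgeCount G W = 0).card

/-- Double counting of the pairs `(T, v)` with `v ∈ T`, where `T` has `k + 1` elements: such a pair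
is the same as a `k`-set `T.erase v` together with a vertex `v` outside it. -/
lemma sum_powersetCard_erase {V : Type*} [Fintype V] (k : ℕ) (f : V → Finset V → ℝ) :
    ∑ T ∈ (Finset.univ : Finset V).powersetCard (k + 1), ∑ v ∈ T, f v (T.erase v)
      = ∑ S ∈ (Finset.univ : Finset V).powersetCard k, ∑ v ∈ Sᶜ, f v S := by
  rw [Finset.sum_sigma', Finset.sum_sigma']
  refine Finset.sum_bij' (fun x _ => ⟨x.1.erase x.2, x.2⟩) (fun x _ => ⟨insert x.2 x.1, x.2⟩)
    ?_ ?_ ?_ ?_ ?_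
  · rintro ⟨T, v⟩ h
    simp only [Finset.mem_sigma, Finset.mem_powersetCard_univ] at h
    simp [Finset.card_erase_of_mem h.2, h.1]
  · rintro ⟨S, v⟩ h
    simp only [Finset.mem_sigma, Finset.mem_powersetCard_univ, Finset.mem_compl] at h
    simp [Finset.card_insert_of_notMem h.2, h.1]
  · rintro ⟨T, v⟩ h
    simp only [Finset.mem_sigma] at h
    simp [Finset.insert_erase h.2]
  · rintro ⟨S, v⟩ h
    simp only [Finset.mem_sigma, Finset.mem_compl] at h
    simp [Finset.erase_insert h.2]
  · intros
    rfl

/-! ### Induced edges of small sets -/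

lemma inducedEdgeCount_eq_zero_iff {V : Type*} (G : SimpleGraph V) (W : Finset V) :
    inducedEdgeCount G W = 0 ↔ ¬ HasEdge G W := by
  unfold inducedEdgeCount HasEdge
  rw [Finset.card_eq_zero, Finset.filter_eq_empty_iff]
  constructor
  · rintro h ⟨x, hx, y, hy, hxy⟩
    refine h (x := {x, y}) ?_ ⟨x, by simp, y, by simp, hxy⟩
    rw [Finset.mem_powersetCard]
    refine ⟨?_, Finset.card_pair hxy.ne⟩
    simp [Finset.insert_subset_iff, hx, hy]
  · rintro h p hp ⟨x, hx, y, hy, hxy⟩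
    have := (Finset.mem_powersetCard.1 hp).1
    exact h ⟨x, this hx, y, this hy, hxy⟩

lemma hasEdge_pair {V : Type*} (G : SimpleGraph V) (a b : V) :
    HasEdge G {a, b} ↔ G.Adj a b := by
  simp only [HasEdge, Finset.mem_insert, Finset.mem_singleton]
  constructor
  · rintro ⟨x, rfl | rfl, y, rfl | rfl, h⟩
    · exact (G.loopless.irrefl _ h).elim
    · exact h
    · exact h.symm
    · exact (G.loopless.irrefl _ h).elim
  · intro h
    exact ⟨a, Or.inl rfl, b, Or.inr rfl, h⟩

lemma inducedEdgeCount_triple {V : Type*} (G : SimpleGraph V) {a b c : V}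
    (hab : a ≠ b) (hac : a ≠ c) (hbc : b ≠ c) :
    inducedEdgeCount G {a, b, c}
      = (if G.Adj a b then 1 else 0) + (if G.Adj a c then 1 else 0)
        + (if G.Adj b c then 1 else 0) := by
  have hp : ({a, b, c} : Finset V).powersetCard 2 = {{a, b}, {a, c}, {b, c}} := by
    symm
    apply Finset.eq_of_subset_of_card_le
    · intro p hp
      simp only [Finset.mem_insert, Finset.mem_singleton] at hp
      rw [Finset.mem_powersetCard]
      rcases hp with rfl | rfl | rfl
      · exact ⟨by intro x; simp; tauto, Finset.card_pair hab⟩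
      · exact ⟨by intro x; simp; tauto, Finset.card_pair hac⟩
      · exact ⟨by intro x; simp; tauto, Finset.card_pair hbc⟩
    · rw [Finset.card_powersetCard, Finset.card_eq_three.2 ⟨a, b, c, hab, hac, hbc, rfl⟩]
      refine le_of_eq (Eq.symm (Finset.card_eq_three.2 ⟨_, _, _, ?_, ?_, ?_, rfl⟩))
      · intro h
        have : c ∈ ({a, b} : Finset V) := by rw [h]; simp
        simp [hac.symm, hbc.symm] at this
      · intro h
        have : a ∈ ({b, c} : Finset V) := by rw [← h]; simp
        simp [hab, hac] at this
      · intro h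
        have : a ∈ ({b, c} : Finset V) := by rw [← h]; simp
        simp [hab, hac] at this
  have h1 : ({a, b} : Finset V) ∉ ({{a, c}, {b, c}} : Finset (Finset V)) := by
    intro h
    simp only [Finset.mem_insert, Finset.mem_singleton] at h
    have : c ∈ ({a, b} : Finset V) := by rcases h with h | h <;> rw [h] <;> simp
    simp [hac.symm, hbc.symm] at this
  have h2 : ({a, c} : Finset V) ∉ ({{b, c}} : Finset (Finset V)) := by
    intro h
    simp only [Finset.mem_singleton] at h
    have : a ∈ ({b, c} : Finset V) := by rw [← h]; simp
    simp [hab, hac] at this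
  have hI : inducedEdgeCount G {a, b, c}
      = ((({a, b, c} : Finset V).powersetCard 2).filter fun p => HasEdge G p).card := by
    unfold inducedEdgeCount HasEdge
    congr!
  rw [hI, hp, Finset.card_filter, Finset.sum_insert h1, Finset.sum_insert h2, Finset.sum_singleton]
  simp only [hasEdge_pair]
  ring

/-! ### Edges and cherries in a triple -/

/-- The number of edges in a triple `T`, as the number of `v ∈ T` opposite to an edge. -/
noncomputable def tripleEdges {V : Type*} (G : SimpleGraph V) (T : Finset V) : ℝ :=
  ∑ v ∈ T, if HasEdge G (T.erase v) then 1 else 0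

/-- The number of cherries in a triple `T`, as the number of `v ∈ T` adjacent to the rest of
`T`. -/
noncomputable def tripleCherries {V : Type*} (G : SimpleGraph V) (T : Finset V) : ℝ :=
  ∑ v ∈ T, if AdjAll G v (T.erase v) then 1 else 0

/-- In terms of the number `0, 1, 2, 3` of edges in `T`, the right-hand sides are `0, 1, 1, 0` and
`3/4, 1, 3/4, 0`. -/
lemma triple_bounds {V : Type*} (G : SimpleGraph V) (T : Finset V) (hT : T.card = 3) :
    ((if inducedEdgeCount G T = 1 then 1 else 0 : ℝ) ≤ tripleEdges G T - tripleCherries G T) ∧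
    ((if inducedEdgeCount G T = 1 then 1 else 0 : ℝ)
        + 3 / 4 * (if inducedEdgeCount G T = 0 then 1 else 0)
      ≤ 3 / 4 + 1 / 4 * tripleEdges G T - 1 / 2 * tripleCherries G T) := by
  obtain ⟨a, b, c, hab, hac, hbc, rfl⟩ := Finset.card_eq_three.1 hT
  have ea : ({a, b, c} : Finset V).erase a = {b, c} := by
    ext x; simp only [Finset.mem_erase, Finset.mem_insert, Finset.mem_singleton]; grind
  have eb : ({a, b, c} : Finset V).erase b = {a, c} := by
    ext x; simp only [Finset.mem_erase, Finset.mem_insert, Finset.mem_singleton]; grind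
  have ec : ({a, b, c} : Finset V).erase c = {a, b} := by
    ext x; simp only [Finset.mem_erase, Finset.mem_insert, Finset.mem_singleton]; grind
  have hE : tripleEdges G {a, b, c} = (if G.Adj b c then 1 else 0) + ((if G.Adj a c then 1 else 0)
      + (if G.Adj a b then 1 else 0)) := by
    unfold tripleEdges
    rw [Finset.sum_insert (by simp [hab, hac]), Finset.sum_insert (by simp [hbc]),
      Finset.sum_singleton, ea, eb, ec]
    simp only [hasEdge_pair]
  have hC : tripleCherries G {a, b, c} = (if G.Adj a b ∧ G.Adj a c then 1 else 0)
      + ((if G.Adj a b ∧ G.Adj b c then 1 else 0)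
      + (if G.Adj a c ∧ G.Adj b c then 1 else 0)) := by
    unfold tripleCherries
    rw [Finset.sum_insert (by simp [hab, hac]), Finset.sum_insert (by simp [hbc]),
      Finset.sum_singleton, ea, eb, ec]
    simp [AdjAll, G.adj_comm b a, G.adj_comm c a, G.adj_comm c b]
  rw [hE, hC, inducedEdgeCount_triple G hab hac hbc]
  by_cases h1 : G.Adj a b <;> by_cases h2 : G.Adj a c <;> by_cases h3 : G.Adj b c <;>
    simp [h1, h2, h3] <;> norm_num

/-! ### Global counts -/

lemma card_edges_eq {V : Type*} [Fintype V] (G : SimpleGraph V) :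
    (((Finset.univ : Finset V).powersetCard 2).filter fun p => HasEdge G p).card
      = G.edgeFinset.card := by
  symm
  refine Finset.card_bij (fun s _ => s.toFinset) ?_ ?_ ?_
  · intro s
    induction s with
    | _ a b =>
      intro h
      rw [SimpleGraph.mem_edgeFinset, SimpleGraph.mem_edgeSet] at h
      rw [Finset.mem_filter, Finset.mem_powersetCard_univ, Sym2.toFinset_mk_eq, hasEdge_pair]
      exact ⟨Finset.card_pair h.ne, h⟩
  · intro s _ t _ h
    ext x
    rw [← Sym2.mem_toFinset, ← Sym2.mem_toFinset, h]
  · intro p hp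
    rw [Finset.mem_filter, Finset.mem_powersetCard_univ] at hp
    obtain ⟨a, b, _, rfl⟩ := Finset.card_eq_two.1 hp.1
    exact ⟨s(a, b), by simpa using (hasEdge_pair G a b).1 hp.2, Sym2.toFinset_mk_eq⟩

lemma card_compl_real {V : Type*} [Fintype V] {k : ℕ} {S : Finset V}
    (hS : S ∈ (Finset.univ : Finset V).powersetCard k) :
    ((Sᶜ).card : ℝ) = (Fintype.card V : ℝ) - k := by
  rw [Finset.mem_powersetCard_univ] at hS
  rw [Finset.card_compl, Nat.cast_sub (Finset.card_le_univ S), hS]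

lemma sum_tripleEdges {V : Type*} [Fintype V] (G : SimpleGraph V) :
    ∑ T ∈ (Finset.univ : Finset V).powersetCard 3, tripleEdges G T
      = G.edgeFinset.card * ((Fintype.card V : ℝ) - 2) := by
  unfold tripleEdges
  rw [sum_powersetCard_erase 2 (fun _ S => if HasEdge G S then (1 : ℝ) else 0), ← card_edges_eq,
    Finset.card_filter, Nat.cast_sum, Finset.sum_mul]
  refine Finset.sum_congr rfl fun S hS => ?_
  rw [Finset.sum_const, nsmul_eq_mul, card_compl_real hS]
  push_cast
  ring

lemma sum_tripleCherries {V : Type*} [Fintype V] (G : SimpleGraph V) :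
    ∑ T ∈ (Finset.univ : Finset V).powersetCard 3, tripleCherries G T
      = ∑ v, ((G.degree v).choose 2 : ℝ) := by
  unfold tripleCherries
  rw [sum_powersetCard_erase 2 (fun v S => if AdjAll G v S then (1 : ℝ) else 0),
    Finset.sum_comm' (t' := Finset.univ)
      (s' := fun v => ((Finset.univ : Finset V).powersetCard 2).filter fun S => v ∉ S)
      (by intro x y; simp)]
  refine Finset.sum_congr rfl fun v _ => ?_
  rw [← Finset.sum_filter, Finset.sum_const, nsmul_eq_mul, mul_one, ← G.card_neighborFinset_eq_degree,
    ← Finset.card_powersetCard]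
  congr 2
  ext S
  simp only [Finset.mem_filter, Finset.mem_powersetCard]
  constructor
  · rintro ⟨⟨⟨_, h1⟩, _⟩, h2⟩
    exact ⟨fun w hw => by simpa using h2 w hw, h1⟩
  · rintro ⟨h1, h2⟩
    have h3 : ∀ w ∈ S, G.Adj v w := fun w hw => by simpa using h1 hw
    exact ⟨⟨⟨Finset.subset_univ S, h2⟩, fun hv => G.loopless.irrefl _ (h3 v hv)⟩, h3⟩

lemma cherries_lower {V : Type*} [Fintype V] (G : SimpleGraph V) (hV : 0 < Fintype.card V) :
    2 * (G.edgeFinset.card : ℝ) ^ 2 / Fintype.card V - G.edgeFinset.card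
      ≤ ∑ v, ((G.degree v).choose 2 : ℝ) := by
  have hd : ∑ v, (G.degree v : ℝ) = 2 * G.edgeFinset.card := by
    exact_mod_cast G.sum_degrees_eq_twice_card_edges
  have hcs := sq_sum_le_card_mul_sum_sq (s := (Finset.univ : Finset V))
    (f := fun v => (G.degree v : ℝ))
  rw [hd, Finset.card_univ] at hcs
  have hn : (0 : ℝ) < Fintype.card V := by exact_mod_cast hV
  have hP : ∑ v, ((G.degree v).choose 2 : ℝ)
      = (∑ v, (G.degree v : ℝ) ^ 2) / 2 - G.edgeFinset.card := by
    have : (G.edgeFinset.card : ℝ) = (∑ v, (G.degree v : ℝ)) / 2 := by rw [hd]; ring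
    rw [this, ← sub_div, ← Finset.sum_sub_distrib, Finset.sum_div]
    refine Finset.sum_congr rfl fun v _ => ?_
    rw [Nat.cast_choose_two]
    ring
  rw [hP]
  have : 2 * (G.edgeFinset.card : ℝ) ^ 2 / Fintype.card V
      ≤ (∑ v, (G.degree v : ℝ) ^ 2) / 2 := by
    rw [div_le_iff₀ hn]
    linarith
  linarith

lemma four_betaZero_le {V : Type*} [Fintype V] (G : SimpleGraph V) :
    4 * (betaZero G : ℝ) ≤ ((Fintype.card V : ℝ) - 3) * alphaZero G := by
  have h := sum_powersetCard_erase (V := V) 3 (fun _ S => if HasEdge G S then (0 : ℝ) else 1)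
  have hr : ∑ S ∈ (Finset.univ : Finset V).powersetCard 3,
      ∑ v ∈ Sᶜ, (if HasEdge G S then (0 : ℝ) else 1)
        = ((Fintype.card V : ℝ) - 3) * alphaZero G := by
    unfold alphaZero
    rw [Finset.card_filter, Nat.cast_sum, Finset.mul_sum]
    refine Finset.sum_congr rfl fun S hS => ?_
    rw [Finset.sum_const, nsmul_eq_mul, card_compl_real hS]
    by_cases hE : HasEdge G S <;> simp [inducedEdgeCount_eq_zero_iff, hE]
  rw [← hr, ← h]
  unfold betaZero
  rw [Finset.card_filter, Nat.cast_sum, Finset.mul_sum]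
  refine Finset.sum_le_sum fun Q hQ => ?_
  rw [Finset.mem_powersetCard_univ] at hQ
  by_cases hE : HasEdge G Q
  · simp only [inducedEdgeCount_eq_zero_iff, hE, not_true_eq_false, if_false]
    push_cast
    rw [mul_zero]
    exact Finset.sum_nonneg fun v _ => by split_ifs <;> norm_num
  · have hs : ∀ v ∈ Q, (if HasEdge G (Q.erase v) then (0 : ℝ) else 1) = 1 := by
      intro v _
      rw [if_neg]
      rintro ⟨x, hx, y, hy, hxy⟩
      exact hE ⟨x, Finset.mem_of_mem_erase hx, y, Finset.mem_of_mem_erase hy, hxy⟩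
    rw [Finset.sum_congr rfl hs]
    simp [inducedEdgeCount_eq_zero_iff, hE, hQ]

lemma alpha_bounds {V : Type*} [Fintype V] (G : SimpleGraph V) :
    (alphaOne G : ℝ) ≤ G.edgeFinset.card * ((Fintype.card V : ℝ) - 2)
        - ∑ v, ((G.degree v).choose 2 : ℝ) ∧
    (alphaOne G : ℝ) + 3 / 4 * alphaZero G
      ≤ 3 / 4 * ((Fintype.card V).choose 3 : ℝ)
        + 1 / 4 * (G.edgeFinset.card * ((Fintype.card V : ℝ) - 2))
        - 1 / 2 * ∑ v, ((G.degree v).choose 2 : ℝ) := by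
  have h1 : (alphaOne G : ℝ) = ∑ T ∈ (Finset.univ : Finset V).powersetCard 3,
      (if inducedEdgeCount G T = 1 then 1 else 0 : ℝ) := by
    rw [alphaOne, Finset.card_filter]
    push_cast
    rfl
  have h0 : (alphaZero G : ℝ) = ∑ T ∈ (Finset.univ : Finset V).powersetCard 3,
      (if inducedEdgeCount G T = 0 then 1 else 0 : ℝ) := by
    rw [alphaZero, Finset.card_filter]
    push_cast
    rfl
  have hc : 3 / 4 * ((Fintype.card V).choose 3 : ℝ)
      = ∑ T ∈ (Finset.univ : Finset V).powersetCard 3, (3 / 4 : ℝ) := by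
    rw [Finset.sum_const, Finset.card_powersetCard, Finset.card_univ, nsmul_eq_mul, mul_comm]
  rw [← sum_tripleEdges, ← sum_tripleCherries, hc, h1, h0]
  simp only [Finset.mul_sum, ← Finset.sum_sub_distrib, ← Finset.sum_add_distrib]
  exact ⟨Finset.sum_le_sum fun T hT =>
      (triple_bounds G T (Finset.mem_powersetCard_univ.1 hT)).1,
    Finset.sum_le_sum fun T hT =>
      (triple_bounds G T (Finset.mem_powersetCard_univ.1 hT)).2⟩

/-! ### The bound -/

/-- `α₁ + (3/(m-3)) β₀ ≤ η³/8 + (e²/η)(a-2) + (1/4) e η (4-3a) - (1/8)(1-a) η³ + c m²`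
for any graph `G` on `η` vertices with `e` edges, where `a = η/m`. -/
theorem alpha_beta_bound :
    ∃ c : ℝ, 0 < c ∧ ∀ (m η : ℕ), 4 ≤ m → 4 ≤ η → η ≤ m →
      ∀ (V : Type) [Fintype V] (G : SimpleGraph V),
        Fintype.card V = η →
        let e : ℕ := G.edgeFinset.card
        let a : ℝ := (η : ℝ) / m
        (alphaOne G : ℝ) + 3 / ((m : ℝ) - 3) * (betaZero G : ℝ)
          ≤ (η : ℝ) ^ 3 / 8 + (e : ℝ) ^ 2 / η * (a - 2)
            + (1 / 4) * e * η * (4 - 3 * a) - (1 / 8) * (1 - a) * (η : ℝ) ^ 3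
            + c * (m : ℝ) ^ 2 := by
  refine ⟨1, one_pos, ?_⟩
  intro m η hm hη hηm V _ G hV e a
  obtain ⟨hA, hB⟩ := alpha_bounds G
  have hP := cherries_lower G (by omega)
  have hb := four_betaZero_le G
  rw [hV] at hA hB hP hb
  change _ ≤ (e : ℝ) * _ - _ at hA
  change _ ≤ _ + 1 / 4 * ((e : ℝ) * _) - _ at hB
  change 2 * (e : ℝ) ^ 2 / η - e ≤ _ at hP
  set P : ℝ := ∑ v, ((G.degree v).choose 2 : ℝ)
  have hmR : (4 : ℝ) ≤ m := by exact_mod_cast hm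
  have hηR : (4 : ℝ) ≤ η := by exact_mod_cast hη
  have hηmR : (η : ℝ) ≤ m := by exact_mod_cast hηm
  have he : (0 : ℝ) ≤ e := Nat.cast_nonneg _
  have hz : (0 : ℝ) ≤ alphaZero G := Nat.cast_nonneg _
  have ha0 : 0 ≤ a := by positivity
  have ha1 : a ≤ 1 := (div_le_one (by linarith)).2 hηmR
  have hC : ((η.choose 3 : ℕ) : ℝ) ≤ (η : ℝ) ^ 3 / 6 := by
    have := Nat.choose_le_pow_div (α := ℝ) 3 η
    norm_num [Nat.factorial] at this
    exact this
  -- The error in passing from `m - 3` to `m` is absorbed by the factor `η - 3`, since `η ≤ m`.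
  have hfrac : ((η : ℝ) - 3) / (m - 3) ≤ a := by
    change _ ≤ (η : ℝ) / m
    rw [div_le_div_iff₀ (by linarith) (by linarith)]
    nlinarith
  have hβ : 3 / ((m : ℝ) - 3) * (betaZero G : ℝ) ≤ 3 / 4 * a * alphaZero G := by
    have hm3 : (0 : ℝ) < m - 3 := by linarith
    calc 3 / ((m : ℝ) - 3) * (betaZero G : ℝ)
        = 3 / 4 / ((m : ℝ) - 3) * (4 * (betaZero G : ℝ)) := by ring
      _ ≤ 3 / 4 / ((m : ℝ) - 3) * (((η : ℝ) - 3) * alphaZero G) := by gcongr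
      _ = 3 / 4 * (((η : ℝ) - 3) / (m - 3)) * alphaZero G := by ring
      _ ≤ 3 / 4 * a * alphaZero G := by gcongr
  have hq : 2 * (e : ℝ) ^ 2 / η = 2 * ((e : ℝ) ^ 2 / η) := by ring
  rw [hq] at hP
  set q : ℝ := (e : ℝ) ^ 2 / η
  have hA' : (alphaOne G : ℝ) ≤ e * η - 2 * q := by linarith
  have hB' : (alphaOne G : ℝ) + 3 / 4 * alphaZero G ≤ (η : ℝ) ^ 3 / 8 + 1 / 4 * (e * η) - q := by
    linarith
  have k1 := mul_le_mul_of_nonneg_left hA' (sub_nonneg.2 ha1)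
  have k2 := mul_le_mul_of_nonneg_left hB' ha0
  have k3 : (0 : ℝ) ≤ (m : ℝ) ^ 2 := by positivity
  linarith
end

section
/- Let G be a finite graph on vertex set V with η = |V| vertices; for v ∈ V let d(v) be its degree and d̄(v) = η − 1 − d(v). Then Σ_{v∈V} d(v)·C(d̄(v), 2) = 2β₁ + 4β_‖ + 2β_∧ + 2β_⊔ + 3β_⊣ + β̄_∧. -/
/-!
Both sides count the pairs `(v, W)` where `W` is a 4-element set of vertices and `v ∈ W` has exactly
one neighbour inside `W`. For a fixed `v`, such a `W` amounts to a choice of one neighbour of `v` and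
two non-neighbours other than `v`, so there are `d(v) * C(d̄(v), 2)` of them
(`card_four_sets_inducedDeg_one`). For a fixed `W`, the number of suitable `v` is the number of
vertices of degree one in the induced subgraph: 2, 4, 2, 2, 3 for the types
`1`, `‖`, `∧`, `⊔`, `⊣`, and 1 for the triangle with a pendant edge, which is the complement of two
adjacent edges; all other types have no vertex of degree one (`local_identity`).
-/

open scoped Classical

/-- The degree of `v` inside `W`: the number of neighbours of `v` belonging to `W`. -/
noncomputable def inducedDeg {V : Type*} (G : SimpleGraph V) (W : Finset V) (v : V) : ℕ :=
  (W.filter fun u => G.Adj v u).card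

/-- `β₁`: the number of 4-element vertex subsets inducing exactly one edge. -/
noncomputable def betaOne {V : Type*} [Fintype V] (G : SimpleGraph V) : ℕ :=
  (((Finset.univ : Finset V).powersetCard 4).filter fun W =>
    inducedEdgeCount G W = 1).card

/-- `β_‖`: the number of 4-element vertex subsets inducing two disjoint edges. -/
noncomputable def betaPar {V : Type*} [Fintype V] (G : SimpleGraph V) : ℕ :=
  (((Finset.univ : Finset V).powersetCard 4).filter fun W =>
    inducedEdgeCount G W = 2 ∧ ∀ v ∈ W, inducedDeg G W v ≤ 1).card

/-- `β_∧`: the number of 4-element vertex subsets inducing two adjacent edges. -/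
noncomputable def betaWedge {V : Type*} [Fintype V] (G : SimpleGraph V) : ℕ :=
  (((Finset.univ : Finset V).powersetCard 4).filter fun W =>
    inducedEdgeCount G W = 2 ∧ ∃ v ∈ W, inducedDeg G W v = 2).card

/-- `β_⊣`: the number of 4-element vertex subsets inducing a star with three edges. -/
noncomputable def betaStar {V : Type*} [Fintype V] (G : SimpleGraph V) : ℕ :=
  (((Finset.univ : Finset V).powersetCard 4).filter fun W =>
    inducedEdgeCount G W = 3 ∧ ∃ v ∈ W, inducedDeg G W v = 3).card

/-- `β_⊔`: the number of 4-element vertex subsets inducing a path with three edges. -/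
noncomputable def betaPath {V : Type*} [Fintype V] (G : SimpleGraph V) : ℕ :=
  (((Finset.univ : Finset V).powersetCard 4).filter fun W =>
    inducedEdgeCount G W = 3 ∧ ∀ v ∈ W, 1 ≤ inducedDeg G W v ∧ inducedDeg G W v ≤ 2).card

/-- Four-element sets in which `v` has exactly one neighbour correspond to pairs consisting of a
one-element set of neighbours of `v` and a two-element set of non-neighbours other than `v`. -/
lemma card_four_sets_inducedDeg_one {V : Type*} [Fintype V] (G : SimpleGraph V)
    [DecidableRel G.Adj] (v : V) :
    (((Finset.univ : Finset V).powersetCard 4).filter fun W =>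
      v ∈ W ∧ inducedDeg G W v = 1).card
      = G.degree v * (Fintype.card V - 1 - G.degree v).choose 2 := by
  set N := G.neighborFinset v with hN
  have hv : v ∉ N := by simp [hN]
  set M := (insert v N)ᶜ with hM
  have hMc : M.card = Fintype.card V - 1 - G.degree v := by
    rw [hM, Finset.card_compl, Finset.card_insert_of_notMem hv, hN,
      SimpleGraph.card_neighborFinset_eq_degree]
    omega
  have hdeg : ∀ W : Finset V, inducedDeg G W v = (W ∩ N).card := by
    intro W
    unfold inducedDeg
    congr 1
    ext u
    simp [hN]
  have hcard : (N.powersetCard 1 ×ˢ M.powersetCard 2).card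
      = G.degree v * (Fintype.card V - 1 - G.degree v).choose 2 := by
    rw [Finset.card_product, Finset.card_powersetCard, Finset.card_powersetCard, hMc, hN,
      SimpleGraph.card_neighborFinset_eq_degree, Nat.choose_one_right]
  have hmem : ∀ u, u ∈ M ↔ u ≠ v ∧ u ∉ N := by
    intro u
    simp [hM]
  rw [← hcard]
  clear hcard hMc
  clear_value M N
  clear hM hN
  -- `W` is sent to its neighbours and non-neighbours of `v`; conversely `v` is added to their union.
  refine Finset.card_nbij' (fun W => (W ∩ N, W ∩ M)) (fun q => insert v (q.1 ∪ q.2)) ?_ ?_ ?_ ?_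
  · intro W hW
    simp only [Finset.coe_filter, Set.mem_ofPred_eq, Finset.mem_powersetCard_univ, hdeg] at hW
    obtain ⟨h4, hvW, h1⟩ := hW
    have hsplit : W = insert v ((W ∩ N) ∪ (W ∩ M)) := by
      ext u
      simp only [hmem, Finset.mem_insert, Finset.mem_union, Finset.mem_inter]
      by_cases u = v <;> grind
    have hdis : Disjoint (W ∩ N) (W ∩ M) := by
      rw [Finset.disjoint_left]
      grind
    have hvn : v ∉ (W ∩ N) ∪ (W ∩ M) := by grind
    have := congrArg Finset.card hsplit
    rw [Finset.card_insert_of_notMem hvn, Finset.card_union_of_disjoint hdis] at this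
    simp only [Finset.coe_product, Set.mem_prod, Finset.mem_coe, Finset.mem_powersetCard]
    exact ⟨⟨Finset.inter_subset_right, h1⟩, Finset.inter_subset_right, by omega⟩
  · rintro ⟨s, t⟩ hst
    simp only [Finset.coe_product, Set.mem_prod, Finset.mem_coe, Finset.mem_powersetCard] at hst
    obtain ⟨⟨hs, hs1⟩, ht, ht2⟩ := hst
    have hdis : Disjoint s t := by
      rw [Finset.disjoint_left]
      grind
    have hvn : v ∉ s ∪ t := by grind
    have hi : insert v (s ∪ t) ∩ N = s := by grind
    simp only [Finset.coe_filter, Set.mem_ofPred_eq, Finset.mem_powersetCard_univ, hdeg, hi]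
    rw [Finset.card_insert_of_notMem hvn, Finset.card_union_of_disjoint hdis]
    exact ⟨by omega, Finset.mem_insert_self _ _, hs1⟩
  · intro W hW
    simp only [Finset.coe_filter, Set.mem_ofPred_eq] at hW
    ext u
    simp only [hmem, Finset.mem_insert, Finset.mem_union, Finset.mem_inter]
    by_cases u = v <;> grind
  · rintro ⟨s, t⟩ hst
    simp only [Finset.coe_product, Set.mem_prod, Finset.mem_coe, Finset.mem_powersetCard] at hst
    obtain ⟨⟨hs, hs1⟩, ht, ht2⟩ := hst
    refine Prod.ext ?_ ?_ <;> grind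

lemma inducedEdgeCount_four {V : Type*} (G : SimpleGraph V) {a b c d : V} (hab : a ≠ b)
    (hac : a ≠ c) (had : a ≠ d) (hbc : b ≠ c) (hbd : b ≠ d) (hcd : c ≠ d) :
    inducedEdgeCount G {a, b, c, d} =
      (if G.Adj a b then 1 else 0) + (if G.Adj a c then 1 else 0) + (if G.Adj a d then 1 else 0)
      + (if G.Adj b c then 1 else 0) + (if G.Adj b d then 1 else 0)
      + (if G.Adj c d then 1 else 0) := by
  have key : ∀ x y : V, (∃ x' ∈ ({x, y} : Finset V), ∃ y' ∈ ({x, y} : Finset V), G.Adj x' y')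
      ↔ G.Adj x y := by
    intro x y
    simp [G.adj_comm y x]
  have hP : Finset.powersetCard 2 ({a, b, c, d} : Finset V)
      = {{a, b}, {a, c}, {a, d}, {b, c}, {b, d}, {c, d}} := by
    ext s
    simp only [Finset.mem_powersetCard, Finset.mem_insert, Finset.mem_singleton]
    constructor
    · rintro ⟨hs, h2⟩
      obtain ⟨x, y, hxy, rfl⟩ := Finset.card_eq_two.mp h2
      have hx := hs (Finset.mem_insert_self x {y})
      have hy := hs (Finset.mem_insert_of_mem (Finset.mem_singleton_self y))
      simp only [Finset.mem_insert, Finset.mem_singleton] at hx hy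
      rcases hx with rfl | rfl | rfl | rfl <;> rcases hy with rfl | rfl | rfl | rfl <;>
        simp_all [Finset.pair_comm]
    · rintro (rfl | rfl | rfl | rfl | rfl | rfl) <;>
        refine ⟨?_, Finset.card_pair ‹_›⟩ <;> intro z <;> simp <;> tauto
  have ne : ∀ {x y z w : V}, ¬ (x = z ∧ y = w) → ¬ (x = w ∧ y = z) →
      ({x, y} : Finset V) ≠ {z, w} := by
    intro x y z w h1 h2 h
    rw [← Finset.coe_inj] at h
    push_cast at h
    rcases Set.pair_eq_pair_iff.mp h with h | h
    exacts [h1 h, h2 h]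
  unfold inducedEdgeCount
  rw [Finset.card_filter, hP]
  rw [Finset.sum_insert, Finset.sum_insert, Finset.sum_insert, Finset.sum_insert,
    Finset.sum_insert, Finset.sum_singleton]
  · simp only [key]
    ring
  all_goals
    simp only [Finset.mem_insert, Finset.mem_singleton, not_or]
    repeat' first | apply And.intro | (apply ne <;> tauto)

lemma inducedDeg_four {V : Type*} (G : SimpleGraph V) {a b c d : V} (hab : a ≠ b) (hac : a ≠ c)
    (had : a ≠ d) (hbc : b ≠ c) (hbd : b ≠ d) (hcd : c ≠ d) (v : V) :
    inducedDeg G {a, b, c, d} v =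
      (if G.Adj v a then 1 else 0) + (if G.Adj v b then 1 else 0) + (if G.Adj v c then 1 else 0)
      + (if G.Adj v d then 1 else 0) := by
  unfold inducedDeg
  rw [Finset.card_filter, Finset.sum_insert (by simp [*]), Finset.sum_insert (by simp [*]),
    Finset.sum_insert (by simp [*]), Finset.sum_singleton]
  ring

/-- The number of degree-one vertices of the subgraph induced on a four-element set, read off from
its isomorphism type. -/
lemma local_identity {V : Type*} (G : SimpleGraph V) (W : Finset V) (hW : W.card = 4) :
    (W.filter fun v => inducedDeg G W v = 1).card
      = 2 * (if inducedEdgeCount G W = 1 then 1 else 0)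
        + 4 * (if inducedEdgeCount G W = 2 ∧ ∀ v ∈ W, inducedDeg G W v ≤ 1 then 1 else 0)
        + 2 * (if inducedEdgeCount G W = 2 ∧ ∃ v ∈ W, inducedDeg G W v = 2 then 1 else 0)
        + 2 * (if inducedEdgeCount G W = 3 ∧
            ∀ v ∈ W, 1 ≤ inducedDeg G W v ∧ inducedDeg G W v ≤ 2 then 1 else 0)
        + 3 * (if inducedEdgeCount G W = 3 ∧ ∃ v ∈ W, inducedDeg G W v = 3 then 1 else 0)
        + (if inducedEdgeCount Gᶜ W = 2 ∧ ∃ v ∈ W, inducedDeg Gᶜ W v = 2 then 1 else 0) := by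
  obtain ⟨a, b, c, d, hab, hac, had, hbc, hbd, hcd, rfl⟩ := Finset.card_eq_four.mp hW
  rw [Finset.card_filter, Finset.sum_insert (by simp [*]), Finset.sum_insert (by simp [*]),
    Finset.sum_insert (by simp [*]), Finset.sum_singleton]
  simp only [inducedEdgeCount_four _ hab hac had hbc hbd hcd,
    inducedDeg_four _ hab hac had hbc hbd hcd, Finset.forall_mem_insert, Finset.exists_mem_insert,
    Finset.mem_singleton, forall_eq, exists_eq_left, SimpleGraph.compl_adj, SimpleGraph.irrefl,
    ne_eq, hab, hac, had, hbc, hbd, hcd, hab.symm, hac.symm, had.symm, hbc.symm, hbd.symm,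
    hcd.symm, G.adj_comm b a, G.adj_comm c a, G.adj_comm d a, G.adj_comm c b, G.adj_comm d b,
    G.adj_comm d c, not_true_eq_false, not_false_eq_true, true_and, false_and, if_false]
  -- Only the 64 possible adjacency patterns on `a, b, c, d` remain.
  by_cases h1 : G.Adj a b <;> by_cases h2 : G.Adj a c <;> by_cases h3 : G.Adj a d <;>
    by_cases h4 : G.Adj b c <;> by_cases h5 : G.Adj b d <;> by_cases h6 : G.Adj c d <;>
    simp [h1, h2, h3, h4, h5, h6]

/-- `Σ_v d(v)·C(d̄(v),2) = 2β₁ + 4β_‖ + 2β_∧ + 2β_⊔ + 3β_⊣ + β̄_∧`. -/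
theorem degree_sum_identity_one {V : Type*} [Fintype V] (G : SimpleGraph V)
    [DecidableRel G.Adj] (η : ℕ) (hη : Fintype.card V = η) :
    ∑ v : V, G.degree v * (η - 1 - G.degree v).choose 2
      = 2 * betaOne G + 4 * betaPar G + 2 * betaWedge G + 2 * betaPath G
        + 3 * betaStar G + betaWedge Gᶜ := by
  subst hη
  simp only [← card_four_sets_inducedDeg_one]
  unfold betaOne betaPar betaWedge betaPath betaStar
  simp only [Finset.card_filter, Finset.mul_sum, ← Finset.sum_add_distrib]
  rw [Finset.sum_comm]
  refine Finset.sum_congr rfl fun W hW => ?_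
  rw [← Finset.card_filter]
  have hfilter : (Finset.univ.filter fun v => v ∈ W ∧ inducedDeg G W v = 1)
      = W.filter fun v => inducedDeg G W v = 1 := by
    ext v
    simp
  rw [hfilter]
  -- What remains differs from `local_identity` only in its decidability instances.
  convert local_identity G W (Finset.mem_powersetCard_univ.mp hW)
end

section
/- For all real numbers a, b with 0 ≤ a ≤ 1 and 0 ≤ b ≤ 1, setting μ = 1 if a < 1/2 and μ = (1 − a)/a if a ≥ 1/2, we have b²·(a⁴/2 − a³) + b·(a³ − 3a⁴/4 − a³μ + a²μ) + (a⁴/4 − a² + a − a²μ + a³μ) ≤ 0.283261. Moreover, if 0 ≤ a < 1/2 (so μ = 1), the left-hand side is at most 1/4. -/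
open scoped Classical

/-!
Write the left-hand side as the quadratic `C + B b - A b²` in `b`, with `A = a³ (1 - a/2) ≥ 0`.

For `a < 1/2` its slope at `b = 1` is `B - 2A = a² (1 - 2a + a²/4) ≥ 0`. Being concave, it is
therefore nondecreasing on `[0,1]`, and its value at `b = 1` is
`a - a² ≤ 1/4`.

For `a ≥ 1/2` one has `A > 0`, and the quadratic stays below `K = 0.283261` for every real `b` as
soon as its discriminant condition `4A(K - C) - B² ≥ 0` holds. Since `μ = (1 - a)/a`, this
expression is `a²` times a sextic polynomial in `a` alone, and `sextic_nonneg` shows that the sextic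
is nonnegative. The constant is nearly optimal: the minimum of the sextic on `[1/2,1]`, attained
near `a = 0.93456`, is about `2·10⁻⁶`.
-/

/-- The discriminant condition for `a ≥ 1/2`, divided by `a²`. Its Taylor expansion in
`t = a - 0.93456` has tiny constant and linear coefficients and dominates a positive quadratic. -/
lemma sextic_nonneg (a : ℝ) (h0 : 1 / 2 ≤ a) (h1 : a ≤ 1) :
    0 ≤ 4 * a * (1 - a / 2) * (0.283261 - a ^ 2 * (1 - a / 2) ^ 2)
      - (a ^ 2 - 3 * a ^ 3 / 4 + (1 - a) ^ 2) ^ 2 := by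
  obtain ⟨t, rfl⟩ : ∃ t, a = t + 0.93456 := ⟨a - 0.93456, by ring⟩
  have ht0 : -0.43456 ≤ t := by linarith
  have ht1 : t ≤ 0.06544 := by linarith
  -- The factor multiplying `t²` in the Taylor expansion, with coefficients rounded to five
  -- places, after `0.2 t²` has been set aside.
  have hT : 0 ≤ 0.69814 + 0.74146 * t - 1.81882 * t ^ 2 - 0.35046 * t ^ 3 - 0.0625 * t ^ 4 := by
    have hu : 0 ≤ 0.69814 + 0.74146 * t - 1.85 * t ^ 2 := by nlinarith
    have hv : 0 ≤ 0.03118 - 0.35046 * t - 0.0625 * t ^ 2 := by nlinarith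
    nlinarith [mul_nonneg (sq_nonneg t) hv]
  have hm := mul_nonneg (sq_nonneg t) hT
  -- `ht3` and `ht4` absorb the rounding in `hT`.
  have ht3 : 0 ≤ t ^ 2 * (t + 0.43456) := mul_nonneg (sq_nonneg t) (by linarith)
  have ht4 : 0 ≤ t ^ 4 := by positivity
  -- Absorbs the constant and linear terms into the reserved `0.2 t²`.
  have hs : 0 ≤ (t - 0.00002) ^ 2 := sq_nonneg _
  nlinarith [hm, ht3, ht4, hs]

/-- The optimization underlying the `2.283261 N` bound: for `a, b ∈ [0,1]` and the
piecewise `μ`, the key quadratic in `b` is at most `0.283261`; moreover for `a < 1/2`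
it is at most `1/4`. -/
theorem key_polynomial_bound (a b : ℝ) (ha0 : 0 ≤ a) (ha1 : a ≤ 1)
    (hb0 : 0 ≤ b) (hb1 : b ≤ 1) (μ : ℝ)
    (hμ : μ = if a < 1 / 2 then 1 else (1 - a) / a) :
    (b ^ 2 * (a ^ 4 / 2 - a ^ 3)
        + b * (a ^ 3 - 3 * a ^ 4 / 4 - a ^ 3 * μ + a ^ 2 * μ)
        + (a ^ 4 / 4 - a ^ 2 + a - a ^ 2 * μ + a ^ 3 * μ) ≤ 0.283261) ∧
    (a < 1 / 2 →
      b ^ 2 * (a ^ 4 / 2 - a ^ 3)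
        + b * (a ^ 3 - 3 * a ^ 4 / 4 - a ^ 3 * μ + a ^ 2 * μ)
        + (a ^ 4 / 4 - a ^ 2 + a - a ^ 2 * μ + a ^ 3 * μ) ≤ 1 / 4) := by
  by_cases h : a < 1 / 2
  · rw [if_pos h] at hμ
    subst hμ
    -- `B - 2A = a² (1 - 2a + a²/4)`
    have hV : 0 ≤ a ^ 2 * (1 - 2 * a + a ^ 2 / 4) :=
      mul_nonneg (sq_nonneg a) (by nlinarith)
    have hA : 0 ≤ a ^ 3 * (1 - a / 2) := mul_nonneg (by positivity) (by linarith)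
    have hb : 0 ≤ 1 - b := by linarith
    -- With `q` the quadratic, `q 1 - q b = (1 - b) (B - 2A) + (1 - b)² A`.
    have key : b ^ 2 * (a ^ 4 / 2 - a ^ 3)
        + b * (a ^ 3 - 3 * a ^ 4 / 4 - a ^ 3 * 1 + a ^ 2 * 1)
        + (a ^ 4 / 4 - a ^ 2 + a - a ^ 2 * 1 + a ^ 3 * 1) ≤ 1 / 4 := by
      linarith [mul_nonneg hb hV, mul_nonneg (sq_nonneg (1 - b)) hA, sq_nonneg (a - 1 / 2)]
    exact ⟨key.trans (by norm_num), fun _ => key⟩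
  · refine ⟨?_, fun h' => absurd h' h⟩
    rw [if_neg h] at hμ
    have ha : 0 < a := by linarith
    have e1 : a * μ = 1 - a := by rw [hμ]; field_simp
    have e2 : a ^ 2 * μ = a * (1 - a) := by linear_combination a * e1
    have e3 : a ^ 3 * μ = a ^ 2 * (1 - a) := by linear_combination a ^ 2 * e1
    rw [e2, e3]
    have hA : 0 < 4 * (a ^ 3 * (1 - a / 2)) :=
      mul_pos (by norm_num) (mul_pos (by positivity) (by linarith))
    have hP := mul_nonneg (sq_nonneg a) (sextic_nonneg a (by linarith) ha1)
    have hsq := sq_nonneg (2 * (a ^ 3 * (1 - a / 2)) * b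
      - a * (a ^ 2 - 3 * a ^ 3 / 4 + (1 - a) ^ 2))
    -- Completing the square: `4A (K - C - B b + A b²) = 4A (K - C) - B² + (2A b - B)²`.
    rw [← sub_nonneg]
    refine nonneg_of_mul_nonneg_right ?_ hA
    linarith [hP, hsq]
end

section
/- For all real numbers u, s with 0 ≤ u ≤ 1 and 0 ≤ s ≤ 1, u + s + √(s·(1 − u)) + √(u·(1 − s)) ≤ 1 + √2, with equality when u = s = (2 + √2)/4. -/
/-! The bound is a weighted AM-GM inequality. Since `(√2 - 1) (√2 + 1) = 1`,
`√(x y) ≤ ((√2 - 1) x + (√2 + 1) y) / 2` for nonnegative `x`, `y`. Applying it to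
`(x, y) = (s, 1 - u)` and `(u, 1 - s)` and adding, the terms in `u + s` cancel and `1 + √2`
remains. The weights are dictated by the equality case `u = s = cos² (π / 8)`, where
`(1 - u) / s = tan² (π / 8) = (√2 - 1)²`. -/

/-- AM-GM with the reciprocal weights `√2 - 1` and `√2 + 1`. -/
lemma sqrt_mul_le_weighted {x y : ℝ} (hx : 0 ≤ x) (hy : 0 ≤ y) :
    Real.sqrt (x * y) ≤ ((Real.sqrt 2 - 1) * x + (Real.sqrt 2 + 1) * y) / 2 := by
  have h2 : Real.sqrt 2 ^ 2 = 2 := Real.sq_sqrt (by norm_num)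
  have h1 : 0 ≤ Real.sqrt 2 - 1 := sub_nonneg.2 (Real.one_le_sqrt.2 (by norm_num))
  refine Real.sqrt_le_iff.2 ⟨by positivity, ?_⟩
  have key : (((Real.sqrt 2 - 1) * x + (Real.sqrt 2 + 1) * y) / 2) ^ 2 - x * y
      = (((Real.sqrt 2 - 1) * x - (Real.sqrt 2 + 1) * y) / 2) ^ 2 := by
    linear_combination (x * y) * h2
  linarith [sq_nonneg (((Real.sqrt 2 - 1) * x - (Real.sqrt 2 + 1) * y) / 2)]

/-- For `u, s ∈ [0,1]`, `u + s + √(s(1-u)) + √(u(1-s)) ≤ 1 + √2`, with equality at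
`u = s = (2 + √2)/4`. -/
theorem sqrt_optimization :
    (∀ u s : ℝ, 0 ≤ u → u ≤ 1 → 0 ≤ s → s ≤ 1 →
      u + s + Real.sqrt (s * (1 - u)) + Real.sqrt (u * (1 - s)) ≤ 1 + Real.sqrt 2) ∧
    ((2 + Real.sqrt 2) / 4 + (2 + Real.sqrt 2) / 4
      + Real.sqrt ((2 + Real.sqrt 2) / 4 * (1 - (2 + Real.sqrt 2) / 4))
      + Real.sqrt ((2 + Real.sqrt 2) / 4 * (1 - (2 + Real.sqrt 2) / 4))
      = 1 + Real.sqrt 2) := by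
  constructor
  · intro u s hu hu1 hs hs1
    have h1 := sqrt_mul_le_weighted hs (sub_nonneg.2 hu1)
    have h2 := sqrt_mul_le_weighted hu (sub_nonneg.2 hs1)
    linarith
  · have h2 : Real.sqrt 2 ^ 2 = 2 := Real.sq_sqrt (by norm_num)
    have h : (2 + Real.sqrt 2) / 4 * (1 - (2 + Real.sqrt 2) / 4) = (Real.sqrt 2 / 4) ^ 2 := by
      linear_combination (-1 / 8) * h2
    rw [h, Real.sqrt_sq (by positivity)]
    ring
end
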